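/- Let p and q be positive integers. If τ ∈ S_ann-nc(p,q), then τ⁻¹γ ∈ S_ann-nc(p,q). (Consequently the annular Kreweras complementation map K(τ) = τ⁻¹γ is a well-defined bijection from S_ann-nc(p,q) to itself.) -/

import Mathlib

/-- The permutation induced by `f` on the subset `B`: an element `b` is sent to the first
element of the sequence `f b, f (f b), f (f (f b)), ...` that lies in `B`
(and is left fixed if no iterate ever returns to `B`). -/
noncomputable def induced {α : Type*} (f : α → α) (B : Set α) (b : α) : α := by
  classical
  exact if h : ∃ k, 0 < k ∧ f^[k] b ∈ B then f^[Nat.find h] b else b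

/-- `A` is an orbit of the permutation `τ`. -/
def IsOrbit {α : Type*} (τ : Equiv.Perm α) (A : Set α) : Prop :=
  ∃ a, A = {b | τ.SameCycle a b}

/-- The number of orbits of `τ` (fixed points count as orbits). -/
noncomputable def numOrbits {α : Type*} (τ : Equiv.Perm α) : ℕ :=
  Set.ncard {A : Set α | IsOrbit τ A}

/-- `induced f S` acts on `a, b, c` as the 3-cycle `(a, b, c)`. -/
def MapsCyc3 {α : Type*} (f : α → α) (S : Set α) (a b c : α) : Prop :=
  induced f S a = b ∧ induced f S b = c ∧ induced f S c = a

/-- `induced f S` acts on `a, b, c, d` as the 4-cycle `(a, b, c, d)`. -/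
def MapsCyc4 {α : Type*} (f : α → α) (S : Set α) (a b c d : α) : Prop :=
  induced f S a = b ∧ induced f S b = c ∧ induced f S c = d ∧ induced f S d = a

/-- `induced f S` acts on `a, b, c, d` as the product of transpositions `(a, c)(b, d)`. -/
def MapsSwap2 {α : Type*} (f : α → α) (S : Set α) (a b c d : α) : Prop :=
  induced f S a = c ∧ induced f S c = a ∧ induced f S b = d ∧ induced f S d = b

/-- `induced f S` acts on `x, y` as the transposition `(x, y)`. -/
def MapsSwap {α : Type*} (f : α → α) (S : Set α) (x y : α) : Prop :=
  induced f S x = y ∧ induced f S y = x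

/-- `σ` is standard with respect to the "forward cycle" `γ₀`, i.e. `σ∣B = γ₀∣B` for
every orbit `B` of `σ`. -/
def DiscStandardRel {n : ℕ} (γ₀ σ : Equiv.Perm (Fin n)) : Prop :=
  ∀ A : Set (Fin n), IsOrbit σ A → ∀ b ∈ A, induced (⇑σ) A b = induced (⇑γ₀) A b

/-- The orbit partition of `σ` has no crossing: there are no `a < b < c < d` with
`a, c` in one orbit and `b, d` in a different orbit. -/
def OrbitsNoCrossing {n : ℕ} (σ : Equiv.Perm (Fin n)) : Prop :=
  ¬ ∃ a b c d : Fin n, a < b ∧ b < c ∧ c < d ∧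
      σ.SameCycle a c ∧ σ.SameCycle b d ∧ ¬ σ.SameCycle a b

/-- Disc non-crossing relative to a given forward cycle `γ₀`. -/
def DiscNCRel {n : ℕ} (γ₀ σ : Equiv.Perm (Fin n)) : Prop :=
  DiscStandardRel γ₀ σ ∧ OrbitsNoCrossing σ

/-- The set `S_disc-nc(n)` of disc non-crossing permutations of `[n]`
(here `[n] = {1, …, n}` is modelled by `Fin n`, and the forward cycle
`γ₀ = (1, 2, …, n)` is `finRotate n`). -/
def DiscNC {n : ℕ} (σ : Equiv.Perm (Fin n)) : Prop :=
  DiscNCRel (finRotate n) σ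

/-- The external points `{1, …, p}` (0-indexed: values `< p`). -/
def extSet (p q : ℕ) : Set (Fin (p + q)) := {i | (i : ℕ) < p}

/-- The internal points `{p+1, …, p+q}` (0-indexed: values `≥ p`). -/
def intSet (p q : ℕ) : Set (Fin (p + q)) := {i | p ≤ (i : ℕ)}

/-- `γ_ext = (1, 2, …, p)`, the forward cycle on the external points. -/
def gammaExt (p q : ℕ) : Equiv.Perm (Fin (p + q)) :=
  ((List.finRange (p + q)).take p).formPerm

/-- `γ_int = (p+1, p+2, …, p+q)`, the forward cycle on the internal points. -/
def gammaInt (p q : ℕ) : Equiv.Perm (Fin (p + q)) :=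
  ((List.finRange (p + q)).drop p).formPerm

/-- `γ = γ_ext · γ_int`. -/
def gammaAnn (p q : ℕ) : Equiv.Perm (Fin (p + q)) := gammaExt p q * gammaInt p q

/-- `λ_{x,y}`: the permutation fixing `x` and `y` and cycling the remaining points as
`(γ_ext(x), γ_ext²(x), …, γ_ext^{p-1}(x), γ_int(y), γ_int²(y), …, γ_int^{q-1}(y))`. -/
def lamPerm (p q : ℕ) (x y : Fin (p + q)) : Equiv.Perm (Fin (p + q)) :=
  (((List.range (p - 1)).map fun k => (gammaExt p q ^ (k + 1)) x) ++
    ((List.range (q - 1)).map fun k => (gammaInt p q ^ (k + 1)) y)).formPerm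

/-- `τ` is standard in `(p,q)`-annular sense. -/
def AnnStandard (p q : ℕ) (τ : Equiv.Perm (Fin (p + q))) : Prop :=
  (∀ A : Set (Fin (p + q)), IsOrbit τ A →
    (∀ b ∈ A ∩ extSet p q,
        induced (⇑τ) (A ∩ extSet p q) b = induced (⇑(gammaExt p q)) (A ∩ extSet p q) b) ∧
    (∀ b ∈ A ∩ intSet p q,
        induced (⇑τ) (A ∩ intSet p q) b = induced (⇑(gammaInt p q)) (A ∩ intSet p q) b)) ∧
  (∀ A : Set (Fin (p + q)), IsOrbit τ A →
    (A ∩ extSet p q).Nonempty → (A ∩ intSet p q).Nonempty →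
    (∃! a, a ∈ A ∩ extSet p q ∧ τ a ∈ intSet p q) ∧
    (∃! a, a ∈ A ∩ intSet p q ∧ τ a ∈ extSet p q))

/-- The annular crossing pattern (AC-1). -/
def AC1 (p q : ℕ) (τ : Equiv.Perm (Fin (p + q))) : Prop :=
  ∃ a b c d : Fin (p + q), List.Pairwise (· ≠ ·) [a, b, c, d] ∧
    MapsCyc4 (⇑(gammaAnn p q)) {a, b, c, d} a b c d ∧
    MapsSwap2 (⇑τ) {a, b, c, d} a b c d

/-- The annular crossing pattern (AC-2). -/
def AC2 (p q : ℕ) (τ : Equiv.Perm (Fin (p + q))) : Prop :=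
  ∃ a b c x y : Fin (p + q), List.Pairwise (· ≠ ·) [a, b, c, x, y] ∧
    x ∈ extSet p q ∧ y ∈ intSet p q ∧
    MapsCyc3 (⇑(lamPerm p q x y)) {a, b, c} a b c ∧
    MapsCyc3 (⇑τ) {a, b, c, x, y} a c b ∧
    MapsSwap (⇑τ) {a, b, c, x, y} x y

/-- The annular crossing pattern (AC-3). -/
def AC3 (p q : ℕ) (τ : Equiv.Perm (Fin (p + q))) : Prop :=
  ∃ a b c d x y : Fin (p + q), List.Pairwise (· ≠ ·) [a, b, c, d, x, y] ∧
    x ∈ extSet p q ∧ y ∈ intSet p q ∧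
    MapsCyc4 (⇑(lamPerm p q x y)) {a, b, c, d} a b c d ∧
    MapsSwap2 (⇑τ) {a, b, c, d, x, y} a b c d ∧
    MapsSwap (⇑τ) {a, b, c, d, x, y} x y

/-- The set `S_ann-nc(p,q)` of `(p,q)`-annular non-crossing permutations. -/
def AnnNC (p q : ℕ) (τ : Equiv.Perm (Fin (p + q))) : Prop :=
  AnnStandard p q τ ∧ ¬ AC1 p q τ ∧ ¬ AC2 p q τ ∧ ¬ AC3 p q τ

/-- A `(p,q)`-connecting set: meets both the external and internal points. -/
def ConnectingBlock (p q : ℕ) (B : Set (Fin (p + q))) : Prop :=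
  (B ∩ extSet p q).Nonempty ∧ (B ∩ intSet p q).Nonempty

/-- `τ` is `(p,q)`-connected: it has a `(p,q)`-connecting orbit. -/
def AnnConnected (p q : ℕ) (τ : Equiv.Perm (Fin (p + q))) : Prop :=
  ∃ A : Set (Fin (p + q)), IsOrbit τ A ∧ ConnectingBlock p q A

/-- A family of blocks has no crossing: no `a < b < c < d` with `a, c` in one block and
`b, d` in a different block. -/
def NoCrossing {n : ℕ} (ρ : Set (Set (Fin n))) : Prop :=
  ¬ ∃ (a b c d : Fin n) (B C : Set (Fin n)), B ∈ ρ ∧ C ∈ ρ ∧ B ≠ C ∧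
      a < b ∧ b < c ∧ c < d ∧ a ∈ B ∧ c ∈ B ∧ b ∈ C ∧ d ∈ C

section Kreweras

open Equiv Module

/-! ### Dimension of the space of invariant functions -/

section Dim

set_option linter.unusedSectionVars false

variable {α : Type*} [Fintype α] [DecidableEq α]

/-- Functions constant on the orbits of `π`. -/
def Fx (π : Perm α) : Submodule ℚ (α → ℚ) where
  carrier := {f | ∀ z, f (π z) = f z}
  add_mem' := by
    intro f g hf hg z
    simp [hf z, hg z]
  zero_mem' := by intro z; simp
  smul_mem' := by
    intro c f hf z
    simp [hf z]

theorem mem_Fx {π : Perm α} {f : α → ℚ} : f ∈ Fx π ↔ ∀ z, f (π z) = f z := Iff.rfl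

/-- The number of orbits, as a dimension. -/
noncomputable def dm (π : Perm α) : ℕ := finrank ℚ (Fx π)

theorem dm_inv (π : Perm α) : dm π⁻¹ = dm π := by
  have : Fx π⁻¹ = Fx π := by
    ext f
    simp only [mem_Fx]
    constructor
    · intro h z
      have := h (π z)
      simpa using this.symm
    · intro h z
      have := h (π⁻¹ z)
      simpa using this.symm
  unfold dm
  rw [this]

theorem dm_mul_swap (π : Perm α) (a b : α) : dm π ≤ dm (π * swap a b) + 1 := by
  let φ : (α → ℚ) →ₗ[ℚ] ℚ := (LinearMap.proj a : (α → ℚ) →ₗ[ℚ] ℚ) - LinearMap.proj b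
  let ψ := φ.domRestrict (Fx π)
  have h1 := LinearMap.finrank_range_add_finrank_ker ψ
  have h2 : finrank ℚ (LinearMap.range ψ) ≤ 1 := by
    have := Submodule.finrank_le (LinearMap.range ψ)
    simpa using this
  have h3 : finrank ℚ (LinearMap.ker ψ) ≤ dm (π * swap a b) := by
    have e : finrank ℚ ((LinearMap.ker ψ).map (Fx π).subtype) = finrank ℚ (LinearMap.ker ψ) :=
      Submodule.finrank_map_subtype_eq _ _
    rw [← e]
    apply Submodule.finrank_mono
    rintro f ⟨g, hg, rfl⟩
    have hg' : g.1 a = g.1 b := by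
      have : ψ g = 0 := hg
      simpa [ψ, φ, sub_eq_zero] using this
    intro z
    have hz := g.2
    rw [mem_Fx] at hz
    simp only [Perm.mul_apply, Submodule.subtype_apply]
    rw [hz, swap_apply_def]
    split_ifs with h h
    · rw [h, hg']
    · rw [h, hg']
    · rfl
  unfold dm at *
  omega

theorem dm_mul_swap' (π : Perm α) (a b : α) : dm (π * swap a b) ≤ dm π + 1 := by
  have := dm_mul_swap (π * swap a b) a b
  rwa [mul_assoc, swap_mul_self, mul_one] at this

theorem dm_swap_mul (π : Perm α) (a b : α) : dm π ≤ dm (swap a b * π) + 1 := by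
  have := dm_mul_swap π⁻¹ a b
  rw [dm_inv, ← dm_inv (π⁻¹ * _)] at this
  simpa using this

theorem dm_swap_mul' (π : Perm α) (a b : α) : dm (swap a b * π) ≤ dm π + 1 := by
  have := dm_swap_mul (swap a b * π) a b
  rwa [← mul_assoc, swap_mul_self, one_mul] at this

theorem swap_self_one (x : α) : swap x x = 1 := swap_self x

theorem swap_three {w x r : α} (h1 : w ≠ x) (h2 : r ≠ w) (h3 : r ≠ x) :
    swap w x * swap w r = swap w r * swap x r := by
  ext z
  simp only [Perm.mul_apply, swap_apply_def]
  grind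

/-- Removing the point `x` from its cycle. -/
def remv (π : Perm α) (x : α) : Perm α := swap x (π x) * π

theorem remv_self (π : Perm α) (x : α) : remv π x x = x := by simp [remv]

theorem remv_of_ne (π : Perm α) {x z : α} (h : π z ≠ x) (h' : z ≠ x) : remv π x z = π z := by
  unfold remv
  rw [Perm.mul_apply, swap_apply_of_ne_of_ne h]
  intro e
  exact h' (π.injective e)

theorem remv_of_eq (π : Perm α) {x z : α} (h : π z = x) : remv π x z = π x := by
  unfold remv
  rw [Perm.mul_apply, h, swap_apply_left]

theorem remv_of_fix (π : Perm α) {x : α} (h : π x = x) : remv π x = π := by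
  rw [remv, h, swap_self_one, one_mul]

theorem dm_rem (π : Perm α) {x : α} (h : π x ≠ x) : dm π + 1 ≤ dm (remv π x) := by
  apply Submodule.finrank_lt_finrank_of_lt
  rw [SetLike.lt_iff_le_and_exists]
  constructor
  · intro f hf z
    rw [mem_Fx] at hf
    unfold remv
    rw [Perm.mul_apply, swap_apply_def]
    split_ifs with h1 h2
    · rw [hf, ← hf z, h1]
    · rw [← hf z, h2, hf]
    · exact hf z
  · refine ⟨Pi.single x 1, ?_, ?_⟩
    · intro z
      by_cases hz : z = x
      · subst hz
        rw [remv_self]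
      · have : remv π x z ≠ x := by
          intro e
          apply hz
          apply (remv π x).injective
          rw [e, remv_self]
        simp [hz, this]
    · intro hf
      have := hf x
      simp [h] at this

theorem dm_split (κ : Perm α) {u : α} (h : κ u ≠ u) : dm κ + 1 ≤ dm (κ * swap u (κ u)) := by
  have h2 : κ (κ u) ≠ κ u := fun e => h (κ.injective e)
  have := dm_rem κ h2
  have e : remv κ (κ u) = κ * swap u (κ u) := by
    unfold remv
    rw [Equiv.mul_swap_eq_swap_mul]
  rwa [e] at this

theorem dm_merge (π : Perm α) (S : Finset α) (hS : ∀ z, π z ∈ S ↔ z ∈ S) {u v : α}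
    (hu : u ∈ S) (hv : v ∉ S) : dm (π * swap u v) + 1 ≤ dm π := by
  apply Submodule.finrank_lt_finrank_of_lt
  rw [SetLike.lt_iff_le_and_exists]
  have key : ∀ f ∈ Fx (π * swap u v), f u = f v := by
    intro f hf
    have h1 : ∀ z, f (π z) = f (swap u v z) := by
      intro z
      have := hf (swap u v z)
      simpa using this
    have h2 : ∑ z ∈ S, f (π z) = ∑ z ∈ S, f z := by
      apply Finset.sum_equiv π
      · intro i; rw [hS]
      · intro i _; rfl
    have h3 : ∑ z ∈ S.erase u, f (swap u v z) = ∑ z ∈ S.erase u, f z := by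
      apply Finset.sum_congr rfl
      intro z hz
      rw [Finset.mem_erase] at hz
      rw [swap_apply_of_ne_of_ne hz.1]
      rintro rfl
      exact hv hz.2
    have h4 := Finset.add_sum_erase S (fun z => f (swap u v z)) hu
    have h5 := Finset.add_sum_erase S f hu
    simp only [h1] at h2
    simp only [swap_apply_left] at h4
    linarith
  constructor
  · intro f hf
    have hk := key f hf
    intro z
    have := hf (swap u v z)
    simp only [Perm.mul_apply, swap_apply_self] at this
    rw [this, swap_apply_def]
    split_ifs with h1 h2
    · rw [h1, hk]
    · rw [h2, hk]
    · rfl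
  · refine ⟨fun z => if z ∈ S then 1 else 0, ?_, ?_⟩
    · intro z
      simp [hS]
    · intro hf
      have := key _ hf
      simp [hu, hv] at this

theorem dm_conj (τ g : Perm α) : dm (g⁻¹ * τ * g) = dm τ := by
  have key : ∀ τ g : Perm α, dm τ ≤ dm (g⁻¹ * τ * g) := by
    intro τ g
    have e := LinearEquiv.finrank_map_eq (LinearEquiv.funCongrLeft ℚ ℚ g) (Fx τ)
    unfold dm
    rw [← e]
    apply Submodule.finrank_mono
    rintro f ⟨h, hh, rfl⟩
    intro z
    have := hh (g z)
    simpa [LinearEquiv.funCongrLeft] using this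
  apply le_antisymm
  · have := key (g⁻¹ * τ * g) g⁻¹
    simpa [mul_assoc] using this
  · exact key τ g

theorem eq_one_of_dm (π : Perm α) (h : Fintype.card α ≤ dm π) : π = 1 := by
  have h0 : Fx π = ⊤ := by
    apply Submodule.eq_top_of_finrank_eq
    apply le_antisymm (Submodule.finrank_le _)
    rw [Module.finrank_pi]
    exact h
  ext z
  have : (Pi.single z 1 : α → ℚ) ∈ Fx π := by rw [h0]; trivial
  have := this z
  by_contra hz
  have hz' : π z ≠ z := hz
  simp [hz'] at this

theorem dm_one : dm (1 : Perm α) = Fintype.card α := by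
  have h0 : Fx (1 : Perm α) = ⊤ := by
    ext f
    simp [mem_Fx]
  unfold dm
  rw [h0]
  simp

/-- The pair `(τ, γ)` has genus zero (`τ` lies on a geodesic from `1` to `γ`). -/
def Good (τ γ : Perm α) : Prop :=
  Fintype.card α + dm γ ≤ dm τ + dm (τ⁻¹ * γ)

theorem good_rem {τ γ : Perm α} (h : Good τ γ) (x : α) : Good (remv τ x) (remv γ x) := by
  unfold Good at *
  have hρ : (remv τ x)⁻¹ * remv γ x = τ⁻¹ * swap x (τ x) * swap x (γ x) * γ := by
    simp [remv, mul_assoc]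
  rw [hρ]
  by_cases h1 : γ x = x
  · by_cases h2 : τ x = x
    · rw [remv_of_fix _ h1, remv_of_fix _ h2]
      rw [h1, h2, swap_self_one, mul_one, mul_one]
      exact h
    · have a1 := dm_rem τ h2
      rw [remv_of_fix _ h1]
      have a2 : τ⁻¹ * swap x (τ x) * swap x (γ x) * γ = swap (τ⁻¹ x) x * (τ⁻¹ * γ) := by
        rw [h1, swap_self_one, Equiv.mul_swap_eq_swap_mul]
        simp [mul_assoc]
      rw [a2]
      have := dm_swap_mul (τ⁻¹ * γ) (τ⁻¹ x) x
      omega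
  · have b0 : dm (remv γ x) ≤ dm γ + 1 := dm_swap_mul' _ _ _
    by_cases h2 : τ x = x
    · rw [remv_of_fix _ h2]
      have a2 : τ⁻¹ * swap x (τ x) * swap x (γ x) * γ = remv (τ⁻¹ * γ) x := by
        have h3 : τ⁻¹ x = x := by rw [Perm.inv_eq_iff_eq, h2]
        rw [h2, swap_self_one]
        unfold remv
        rw [mul_one, Equiv.mul_swap_eq_swap_mul, h3]
        simp [mul_assoc]
      rw [a2]
      have : (τ⁻¹ * γ) x ≠ x := by
        rw [Perm.mul_apply, Ne, Perm.inv_eq_iff_eq, h2]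
        exact h1
      have := dm_rem _ this
      omega
    · have a1 := dm_rem τ h2
      by_cases h3 : γ x = τ x
      · have a2 : τ⁻¹ * swap x (τ x) * swap x (γ x) * γ = τ⁻¹ * γ := by
          rw [h3, mul_assoc τ⁻¹, swap_mul_self, mul_one]
        rw [a2]
        omega
      · have a2 : τ⁻¹ * swap x (τ x) * swap x (γ x) * γ
            = swap (τ⁻¹ x) (τ⁻¹ (γ x)) * remv (τ⁻¹ * γ) x := by
          have c1 : τ⁻¹ x ≠ x := by
            rw [Ne, Perm.inv_eq_iff_eq]; exact fun e => h2 e.symm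
          have c2 : τ⁻¹ (γ x) ≠ x := by
            rw [Ne, Perm.inv_eq_iff_eq]; exact h3
          have c3 : τ⁻¹ (γ x) ≠ τ⁻¹ x := fun e => h1 (τ⁻¹.injective e)
          rw [Equiv.mul_swap_eq_swap_mul τ⁻¹, mul_assoc (swap _ _) τ⁻¹,
            Equiv.mul_swap_eq_swap_mul τ⁻¹]
          unfold remv
          have c5 : τ⁻¹ (τ x) = x := by simp
          rw [c5, Perm.mul_apply, mul_assoc, mul_assoc, ← mul_assoc (swap _ _),
            ← mul_assoc (swap (τ⁻¹ x) (τ⁻¹ (γ x))), swap_three c1 c3 c2]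
        rw [a2]
        have c4 : (τ⁻¹ * γ) x ≠ x := by
          rw [Perm.mul_apply, Ne, Perm.inv_eq_iff_eq]
          exact h3
        have a3 := dm_rem _ c4
        have a4 := dm_swap_mul (remv (τ⁻¹ * γ) x) (τ⁻¹ x) (τ⁻¹ (γ x))
        omega

theorem good_of_rem_eq {τ γ : Perm α} {x : α} (hx : τ x = γ x) (hγ : γ x ≠ x)
    (h : Good (remv τ x) (remv γ x)) : Good τ γ := by
  unfold Good at *
  have hρ : (remv τ x)⁻¹ * remv γ x = τ⁻¹ * γ := by
    simp only [remv, mul_inv_rev, hx, swap_inv, mul_assoc]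
    rw [← mul_assoc (swap _ _), swap_mul_self, one_mul]
  rw [hρ] at h
  have := dm_rem γ hγ
  have : dm (remv τ x) ≤ dm τ + 1 := dm_swap_mul' _ _ _
  omega

theorem good_of_rem_fix {τ γ : Perm α} {x : α} (hx : τ x = x)
    (h : Good (remv τ x) (remv γ x)) : Good τ γ := by
  by_cases hγ : γ x = x
  · rwa [remv_of_fix _ hx, remv_of_fix _ hγ] at h
  unfold Good at *
  rw [remv_of_fix _ hx] at h
  have a2 : τ⁻¹ * remv γ x = swap (τ⁻¹ x) (τ⁻¹ (γ x)) * (τ⁻¹ * γ) := by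
    unfold remv
    rw [← mul_assoc, Equiv.mul_swap_eq_swap_mul, mul_assoc]
  rw [a2] at h
  have := dm_rem γ hγ
  have := dm_swap_mul' (τ⁻¹ * γ) (τ⁻¹ x) (τ⁻¹ (γ x))
  omega

end Dim

/-! ### First returns -/

section Returns

set_option linter.unusedSectionVars false

variable {α : Type*}

/-- `Ret f B b c`: the first return of `b` to `B` under `f` is `c`. -/
inductive Ret (f : α → α) (B : Set α) : α → α → Prop
  | base (b : α) : f b ∈ B → Ret f B b (f b)
  | step (b c : α) : f b ∉ B → Ret f B (f b) c → Ret f B b c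

theorem Ret.mem {f : α → α} {B : Set α} {b c : α} (h : Ret f B b c) : c ∈ B := by
  induction h with
  | base b h => exact h
  | step b c _ _ ih => exact ih

theorem Ret.unique {f : α → α} {B : Set α} {b c c' : α} (h : Ret f B b c) (h' : Ret f B b c') :
    c = c' := by
  induction h with
  | base b h =>
    cases h' with
    | base => rfl
    | step _ _ h1 h2 => exact absurd h h1
  | step b c h0 _ ih =>
    cases h' with
    | base _ h1 => exact absurd h1 h0
    | step _ _ h1 h2 => exact ih h2

theorem Ret.sameCycle {π : Perm α} {B : Set α} {b c : α} (h : Ret π B b c) :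
    π.SameCycle b c := by
  induction h with
  | base b h => exact (Perm.SameCycle.refl π b).apply_right
  | step b c _ _ ih => exact Perm.sameCycle_apply_left.1 ih

theorem Ret.mono {f : α → α} {B B' : Set α} {b c : α} (h : Ret f B b c) (hB : B' ⊆ B)
    (hc : c ∈ B') : Ret f B' b c := by
  induction h with
  | base b h => exact Ret.base b hc
  | step b c h0 _ ih => exact Ret.step b c (fun e => h0 (hB e)) (ih hc)

theorem ret_of_iter (f : α → α) (B : Set α) (k : ℕ) : ∀ b, f^[k + 1] b ∈ B →
    (∀ j, 0 < j → j < k + 1 → f^[j] b ∉ B) → Ret f B b (f^[k + 1] b) := by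
  induction k with
  | zero =>
    intro b h _
    exact Ret.base b h
  | succ k ih =>
    intro b h h'
    have h1 : f b ∉ B := h' 1 (by omega) (by omega)
    apply Ret.step b _ h1
    rw [Function.iterate_succ_apply]
    apply ih
    · rwa [← Function.iterate_succ_apply]
    · intro j hj hj'
      rw [← Function.iterate_succ_apply]
      exact h' _ (by omega) (by omega)

theorem ret_induced' (f : α → α) (B : Set α) (b : α) (h : ∃ k, 0 < k ∧ f^[k] b ∈ B) :
    Ret f B b (induced f B b) := by
  classical
  have e : induced f B b = f^[Nat.find h] b := by
    unfold induced
    rw [dif_pos h]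
  rw [e]
  obtain ⟨h1, h2⟩ := Nat.find_spec h
  obtain ⟨k, hk⟩ : ∃ k, Nat.find h = k + 1 := ⟨Nat.find h - 1, by omega⟩
  have h3 : ∀ j, 0 < j → j < k + 1 → f^[j] b ∉ B := by
    intro j hj hj' hh
    rw [← hk] at hj'
    exact Nat.find_min h hj' ⟨hj, hh⟩
  rw [hk] at h2 ⊢
  exact ret_of_iter f B k b h2 h3

theorem ret_induced [Finite α] (π : Perm α) {B : Set α} {b : α} (hb : b ∈ B) :
    Ret π B b (induced π B b) := by
  apply ret_induced'
  obtain ⟨n, hn, h⟩ := (Perm.SameCycle.refl π b).exists_pow_eq'' 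
  refine ⟨n, hn, ?_⟩
  rw [← Perm.coe_pow, h.2]
  exact hb

theorem induced_iff [Finite α] (π : Perm α) {B : Set α} {b c : α} (hb : b ∈ B) :
    induced π B b = c ↔ Ret π B b c := by
  constructor
  · rintro rfl
    exact ret_induced π hb
  · intro h
    exact (ret_induced π hb).unique h

theorem exists_ret [Finite α] (π : Perm α) {B : Set α} {b : α} (hb : b ∈ B) :
    ∃ c, Ret π B b c := ⟨_, ret_induced π hb⟩

theorem ret_closed [Finite α] (π : Perm α) {B P : Set α} 
    (hP : ∀ z ∈ P, ∃ w ∈ P, Ret π B z w) {z c : α} (hz : z ∈ P) (hs : π.SameCycle z c)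
    (hc : c ∈ B) : c ∈ P := by
  obtain ⟨n, hn⟩ := hs.exists_nat_pow_eq
  have key : ∀ n : ℕ, ((π ^ n) z ∉ B ∨ (π ^ n) z ∈ P) ∧ ∃ w ∈ P, Ret π B ((π ^ n) z) w := by
    intro n
    induction n with
    | zero => exact ⟨Or.inr hz, hP z hz⟩
    | succ n ih =>
      obtain ⟨_, w, hw, hr⟩ := ih
      rw [pow_succ', Perm.mul_apply]
      cases hr with
      | base _ h => exact ⟨Or.inr hw, hP _ hw⟩
      | step _ _ h h' => exact ⟨Or.inl h, w, hw, h'⟩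
  have := (key n).1
  rw [hn] at this
  tauto

theorem ret_ne [Finite α] (π : Perm α) {B : Set α} {x y w : α} 
    (hy : y ∈ B) (hxy : y ≠ x) (hs : π.SameCycle x y) (hr : Ret π B x w) : w ≠ x := by
  rintro rfl
  have := ret_closed π (P := {w}) (B := B) (by rintro z rfl; exact ⟨z, rfl, hr⟩) rfl hs hy
  exact hxy this

theorem mapsCyc3_of [Finite α] (π : Perm α) {B : Set α} {a b c : α} (hab : a ≠ b) (hac : a ≠ c)
    (hbc : b ≠ c) (ha : a ∈ B) (hb : b ∈ B) (hc : c ∈ B)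
    (hB : ∀ z ∈ B, π.SameCycle a z → z = a ∨ z = b ∨ z = c)
    (hs : π.SameCycle a b) (hs' : π.SameCycle a c) (h : Ret π B a b) :
    MapsCyc3 π B a b c := by
  refine ⟨(induced_iff π ha).2 h, ?_, ?_⟩
  · rw [induced_iff π hb]
    obtain ⟨w, hw⟩ := exists_ret π hb
    rcases hB w hw.mem (hs.trans hw.sameCycle) with rfl | rfl | rfl
    · exfalso
      have := ret_closed π (P := {w, b}) (B := B)
        (by rintro z (rfl | rfl)
            · exact ⟨b, by simp, h⟩
            · exact ⟨w, by simp, hw⟩) (z := b) (by simp) (hs.symm.trans hs') hc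
      rcases this with rfl | rfl <;> contradiction
    · exact absurd rfl (ret_ne π ha hab hs.symm hw)
    · exact hw
  · rw [induced_iff π hc]
    obtain ⟨w, hw⟩ := exists_ret π hc
    obtain ⟨w', hw'⟩ := exists_ret π hb
    rcases hB w hw.mem (hs'.trans hw.sameCycle) with rfl | rfl | rfl
    · exact hw
    · exfalso
      rcases hB w' hw'.mem (hs.trans hw'.sameCycle) with rfl | rfl | rfl
      · have := ret_closed π (P := {w, w'}) (B := B)
          (by rintro z (rfl | rfl)
              · exact ⟨w', by simp, hw'⟩
              · exact ⟨w, by simp, h⟩) (z := w) (by simp) (hs.symm.trans hs') hc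
        rcases this with rfl | rfl <;> contradiction
      · exact absurd rfl (ret_ne π ha hab hs.symm hw')
      · have := ret_closed π (P := {w, w'}) (B := B)
          (by rintro z (rfl | rfl)
              · exact ⟨w', by simp, hw'⟩
              · exact ⟨w, by simp, hw⟩) (z := w) (by simp) hs.symm ha
        rcases this with rfl | rfl <;> contradiction
    · exact absurd rfl (ret_ne π ha hac hs'.symm hw)

theorem mapsSwap_of [Finite α] (π : Perm α) {B : Set α} {x y : α} (hxy : x ≠ y) 
    (hx : x ∈ B) (hy : y ∈ B) (hB : ∀ z ∈ B, π.SameCycle x z → z = x ∨ z = y)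
    (hs : π.SameCycle x y) : MapsSwap π B x y := by
  constructor
  · rw [induced_iff π hx]
    obtain ⟨w, hw⟩ := exists_ret π hx
    rcases hB w hw.mem hw.sameCycle with rfl | rfl
    · exact absurd rfl (ret_ne π hy hxy.symm hs hw)
    · exact hw
  · rw [induced_iff π hy]
    obtain ⟨w, hw⟩ := exists_ret π hy
    rcases hB w hw.mem (hs.trans hw.sameCycle) with rfl | rfl
    · exact hw
    · exact absurd rfl (ret_ne π hx hxy hs.symm hw)

theorem mapsSwap2_of [Finite α] (π : Perm α) {B : Set α} {a b c d : α} (hac : a ≠ c) (hbd : b ≠ d)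
    (ha : a ∈ B) (hb : b ∈ B) (hc : c ∈ B) (hd : d ∈ B)
    (hB : ∀ z ∈ B, π.SameCycle a z → z = a ∨ z = c)
    (hB' : ∀ z ∈ B, π.SameCycle b z → z = b ∨ z = d)
    (hs : π.SameCycle a c) (hs' : π.SameCycle b d) : MapsSwap2 π B a b c d := by
  obtain ⟨h1, h2⟩ := mapsSwap_of π hac ha hc hB hs
  obtain ⟨h3, h4⟩ := mapsSwap_of π hbd hb hd hB' hs'
  exact ⟨h1, h2, h3, h4⟩

/-! ### Restriction to a subset -/

theorem ret_remv [Fintype α] [DecidableEq α] (π : Perm α) {B : Set α} {x b c : α} (hx : x ∉ B)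
    (h : Ret π B b c) : (b ≠ x → Ret (remv π x) B b c) ∧
      (b = x → ∀ b', remv π x b' = π x → Ret (remv π x) B b' c) := by
  induction h with
  | base b h =>
    constructor
    · intro hb
      have h1 : π b ≠ x := fun e => hx (e ▸ h)
      have h2 := remv_of_ne π h1 hb
      rw [← h2] at h ⊢
      exact Ret.base b h
    · rintro rfl b' hb'
      rw [← hb'] at h ⊢
      exact Ret.base b' h
  | step b c h h' ih =>
    constructor
    · intro hb
      by_cases h1 : π b = x
      · exact ih.2 h1 b (by rw [remv_of_eq π h1])
      · have h2 := remv_of_ne π h1 hb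
        apply Ret.step
        · rwa [h2]
        · rw [h2]
          exact ih.1 h1
    · rintro rfl b' hb'
      by_cases h1 : π b = b
      · exact ih.2 h1 b' hb'
      · apply Ret.step
        · rwa [hb']
        · rw [hb']
          exact ih.1 h1

variable [Fintype α] [DecidableEq α]

theorem good_restrict (S : Finset α) : ∀ τ γ : Perm α, Good τ γ → ∃ τ' γ' : Perm α,
    Good τ' γ' ∧ (∀ x ∈ S, τ' x = x) ∧ (∀ x ∈ S, γ' x = x) ∧
    (∀ b c (B : Set α), (∀ x ∈ S, x ∉ B) → b ∉ S → Ret τ B b c → Ret τ' B b c) ∧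
    (∀ b c (B : Set α), (∀ x ∈ S, x ∉ B) → b ∉ S → Ret γ B b c → Ret γ' B b c) := by
  induction S using Finset.induction_on with
  | empty =>
    intro τ γ h
    exact ⟨τ, γ, h, by simp, by simp, fun _ _ _ _ _ h => h, fun _ _ _ _ _ h => h⟩
  | insert x S hx ih =>
    intro τ γ h
    obtain ⟨τ', γ', h1, h2, h3, h4, h5⟩ := ih τ γ h
    have aux : ∀ π : Perm α, (∀ z ∈ S, π z = z) → ∀ z ∈ insert x S, remv π x z = z := by
      intro π hπ z hz
      by_cases hzx : z = x
      · rw [hzx, remv_self]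
      · rw [Finset.mem_insert] at hz
        have hz' := hπ z (by tauto)
        rw [remv_of_ne, hz'] 
        · rw [hz']; exact hzx
        · exact hzx
    refine ⟨remv τ' x, remv γ' x, good_rem h1 x, aux _ h2, aux _ h3, ?_, ?_⟩
    · intro b c B hB hb hr
      simp only [Finset.mem_insert, not_or] at hb
      exact (ret_remv _ (hB x (by simp)) (h4 b c B (fun z hz => hB z (by simp [hz])) hb.2 hr)).1 hb.1
    · intro b c B hB hb hr
      simp only [Finset.mem_insert, not_or] at hb
      exact (ret_remv _ (hB x (by simp)) (h5 b c B (fun z hz => hB z (by simp [hz])) hb.2 hr)).1 hb.1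

theorem good_restrict' {τ γ : Perm α} (h : Good τ γ) (B : Finset α) : ∃ τ' γ' : Perm α,
    Good τ' γ' ∧ (∀ x ∉ B, τ' x = x) ∧ (∀ x ∉ B, γ' x = x) ∧
    (∀ b ∈ B, τ' b = induced τ B b) ∧ (∀ b ∈ B, γ' b = induced γ B b) := by
  obtain ⟨τ', γ', h1, h2, h3, h4, h5⟩ := good_restrict Bᶜ τ γ h
  have aux : ∀ π π' : Perm α, (∀ x ∈ Bᶜ, π' x = x) →
      (∀ b c (B' : Set α), (∀ x ∈ Bᶜ, x ∉ B') → b ∉ Bᶜ → Ret π B' b c → Ret π' B' b c) →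
      ∀ b ∈ B, π' b = induced π B b := by
    intro π π' hf hr b hb
    have hb' : b ∈ (B : Set α) := hb
    have r1 := hr b _ B (by simp) (by simpa using hb) (ret_induced π hb')
    have hm : π' b ∈ B := by
      by_contra hc
      have := hf (π' b) (by simpa using hc)
      have := π'.injective this
      rw [this] at hc
      exact hc hb
    exact (Ret.base b (by exact hm)).unique r1
  refine ⟨τ', γ', h1, ?_, ?_, aux τ τ' h2 h4, aux γ γ' h3 h5⟩
  · intro x hx; exact h2 x (by simpa using hx)
  · intro x hx; exact h3 x (by simpa using hx)

theorem good_no3 {τ γ : Perm α} (h : Good τ γ) {a b c : α} (hab : a ≠ b) 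
    (hγ : MapsCyc3 γ {a, b, c} a b c) (hτ : MapsCyc3 τ {a, b, c} a c b) : False := by
  obtain ⟨τ', γ', h1, h2, h3, h4, h5⟩ := good_restrict' h {a, b, c}
  obtain ⟨g1, g2, g3⟩ := hγ
  obtain ⟨t1, t2, t3⟩ := hτ
  have e4 := h4 a (by simp)
  have e5 := h4 b (by simp)
  have e6 := h4 c (by simp)
  have e7 := h5 a (by simp)
  have e8 := h5 b (by simp)
  have e9 := h5 c (by simp)
  push_cast at e4 e5 e6 e7 e8 e9
  rw [t1] at e4
  rw [t3] at e5
  rw [t2] at e6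
  rw [g1] at e7
  rw [g2] at e8
  rw [g3] at e9
  have m1 : τ' = γ'⁻¹ := by
    rw [eq_inv_iff_mul_eq_one]
    ext z
    by_cases hz : z ∈ ({a, b, c} : Finset α)
    · simp only [Finset.mem_insert, Finset.mem_singleton] at hz
      rcases hz with rfl | rfl | rfl <;> simp [*]
    · simp [h2 z hz, h3 z hz]
  have m2 : γ' * γ' = τ' := by
    ext z
    by_cases hz : z ∈ ({a, b, c} : Finset α)
    · simp only [Finset.mem_insert, Finset.mem_singleton] at hz
      rcases hz with rfl | rfl | rfl <;> simp only [Perm.mul_apply, e4, e5, e6, e7, e8, e9]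
    · simp [h2 z hz, h3 z hz]
  unfold Good at h1
  rw [m1, inv_inv, m2, m1, dm_inv] at h1
  have := eq_one_of_dm γ' (by omega)
  rw [this] at e7
  exact hab e7

theorem good_no4 {τ γ : Perm α} (h : Good τ γ) {a b c d : α} (hac : a ≠ c) 
    (hγ : MapsCyc4 γ {a, b, c, d} a b c d) (hτ : MapsSwap2 τ {a, b, c, d} a b c d) : False := by
  obtain ⟨τ', γ', h1, h2, h3, h4, h5⟩ := good_restrict' h {a, b, c, d}
  obtain ⟨g1, g2, g3, g4⟩ := hγ
  obtain ⟨t1, t2, t3, t4⟩ := hτ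
  have e4 := h4 a (by simp)
  have e5 := h4 b (by simp)
  have e6 := h4 c (by simp)
  have e6' := h4 d (by simp)
  have e7 := h5 a (by simp)
  have e8 := h5 b (by simp)
  have e9 := h5 c (by simp)
  have e9' := h5 d (by simp)
  push_cast at e4 e5 e6 e7 e8 e9 e6' e9'
  rw [t1] at e4
  rw [t3] at e5
  rw [t2] at e6
  rw [t4] at e6'
  rw [g1] at e7
  rw [g2] at e8
  rw [g3] at e9
  rw [g4] at e9'
  have m1 : τ' = γ' * γ' := by
    ext z
    by_cases hz : z ∈ ({a, b, c, d} : Finset α)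
    · simp only [Finset.mem_insert, Finset.mem_singleton] at hz
      rcases hz with rfl | rfl | rfl | rfl <;> simp [*]
    · simp [h2 z hz, h3 z hz]
  have m2 : τ'⁻¹ * γ' = γ'⁻¹ := by
    rw [m1]
    group
  unfold Good at h1
  rw [m2, dm_inv] at h1
  have := eq_one_of_dm τ' (by omega)
  rw [this] at e4
  exact hac e4

/-! ### Cyclic orders -/

/-- Cyclic order on numbers. -/
def cyc (a b c : ℕ) : Prop := a < b ∧ b < c ∨ b < c ∧ c < a ∨ c < a ∧ a < b

/-- Standard, non-crossing permutations have genus zero. -/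
theorem good_of_nc {β : Type*} (pos : α → ℕ) (κ : α → β) (N : ℕ) :
    ∀ (E : Finset α) (τ γ : Perm α), E.card = N → 
    Set.InjOn pos E →
    (∀ z ∉ E, τ z = z) → (∀ z ∉ E, γ z = z) → 
    (∀ a ∈ E, ∀ c ∈ E, c ≠ a → c ≠ γ a → cyc (pos a) (pos (γ a)) (pos c)) →
    (∀ a ∈ E, κ (τ a) = κ a) →
    (∀ a ∈ E, ∀ c ∈ E, κ c = κ a → c ≠ a → c ≠ τ a → cyc (pos a) (pos (τ a)) (pos c)) →
    (∀ a ∈ E, ∀ b ∈ E, ∀ c ∈ E, ∀ d ∈ E, pos a < pos b → pos b < pos c → pos c < pos d →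
      κ a = κ c → κ b = κ d → κ a = κ b) → Good τ γ := by
  induction N with
  | zero =>
    intro E τ γ hE _ ht hg _ _ _ _
    rw [Finset.card_eq_zero] at hE
    subst hE
    have h1 : τ = 1 := by ext z; exact ht z (by simp)
    have h2 : γ = 1 := by ext z; exact hg z (by simp)
    subst h1 h2
    unfold Good
    simp [dm_one]
  | succ N ih =>
    intro E τ γ hE hinj ht hg hγ hκ hτ hnc
    have maps : ∀ π : Perm α, (∀ z ∉ E, π z = z) → ∀ z ∈ E, π z ∈ E := by
      intro π hπ z hz
      by_contra hc
      have := π.injective (hπ _ hc)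
      rw [this] at hc
      exact hc hz
    have ht' := maps τ ht
    have hg' := maps γ hg
    have remgood : ∀ x ∈ E, Good (remv τ x) (remv γ x) := by
      intro x hx
      have hfix : ∀ π : Perm α, (∀ z ∉ E, π z = z) → ∀ z ∉ E.erase x, remv π x z = z := by
        intro π hπ z hz
        by_cases hzx : z = x
        · rw [hzx, remv_self]
        · have hz' := hπ z (by simpa [hzx] using hz)
          rw [remv_of_ne, hz'] 
          · rw [hz']; exact hzx
          · exact hzx
      apply ih (E.erase x) (remv τ x) (remv γ x)
      · rw [Finset.card_erase_of_mem hx]; omega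
      · exact hinj.mono (by simp)
      · exact hfix τ ht
      · exact hfix γ hg
      · intro a ha c hc hca hcg
        rw [Finset.mem_erase] at ha hc
        by_cases hax : γ a = x
        · rw [remv_of_eq γ hax] at hcg ⊢
          have a1 := hγ a ha.2 c hc.2 hca (by rw [hax]; exact hc.1)
          have a2 := hγ x hx c hc.2 hc.1 hcg
          rw [hax] at a1
          unfold cyc at *
          omega
        · rw [remv_of_ne γ hax ha.1] at hcg ⊢
          exact hγ a ha.2 c hc.2 hca hcg
      · intro a ha
        rw [Finset.mem_erase] at ha
        by_cases hax : τ a = x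
        · rw [remv_of_eq τ hax, hκ x hx, ← hax, hκ a ha.2]
        · rw [remv_of_ne τ hax ha.1, hκ a ha.2]
      · intro a ha c hc hcκ hca hcg
        rw [Finset.mem_erase] at ha hc
        by_cases hax : τ a = x
        · rw [remv_of_eq τ hax] at hcg ⊢
          have a1 := hτ a ha.2 c hc.2 hcκ hca (by rw [hax]; exact hc.1)
          have a2 := hτ x hx c hc.2 (by rw [hcκ, ← hax, hκ a ha.2]) hc.1 hcg
          rw [hax] at a1
          unfold cyc at *
          omega
        · rw [remv_of_ne τ hax ha.1] at hcg ⊢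
          exact hτ a ha.2 c hc.2 hcκ hca hcg
      · intro a ha b hb c hc d hd
        rw [Finset.mem_erase] at ha hb hc hd
        exact hnc a ha.2 b hb.2 c hc.2 d hd.2
    by_cases hfx : ∃ x ∈ E, τ x = x
    · obtain ⟨x, hx, hxx⟩ := hfx
      exact good_of_rem_fix hxx (remgood x hx)
    push Not at hfx
    have hpne : ∀ x ∈ E, ∀ y ∈ E, x ≠ y → pos x ≠ pos y := fun x hx y hy h e => h (hinj hx hy e)
    obtain ⟨m, hm, hmin⟩ := Finset.exists_min_image E pos (Finset.card_pos.1 (by omega))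
    obtain ⟨a, ha, hmin'⟩ := Finset.exists_min_image (E.filter fun z => pos z < pos (τ z))
      (fun z => pos (τ z) - pos z) ⟨m, by
        rw [Finset.mem_filter]
        refine ⟨hm, ?_⟩
        have := hmin _ (ht' m hm)
        have := hpne _ hm _ (ht' m hm) (hfx m hm).symm
        omega⟩
    simp only [Finset.mem_filter, and_imp] at ha hmin'
    obtain ⟨ha, hlt⟩ := ha
    have hfa := hfx a ha
    have hne : γ a ≠ a := by
      intro e
      have := hγ a ha (τ a) (ht' a ha) hfa (by rw [e]; exact hfa)
      rw [e] at this
      unfold cyc at this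
      omega
    by_cases hta : τ a = γ a
    · exact good_of_rem_eq hta hne (remgood a ha)
    exfalso
    have c1 := hγ a ha (τ a) (ht' a ha) hfa hta
    have hbE := hg' a ha
    generalize γ a = b at *
    have hκb : κ b ≠ κ a := by
      intro e
      have := hτ a ha b hbE e hne (Ne.symm hta)
      unfold cyc at *
      omega
    have hcE := ht' b hbE
    have hfb := hfx b hbE
    have hκc := hκ b hbE
    have p1 := hpne _ hcE _ hbE hfb
    have p2 := hpne _ hcE _ ha (by rintro e; rw [e] at hκc; exact hκb hκc.symm)
    have p3 := hpne _ hcE _ (ht' a ha) (by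
      intro e; rw [e, hκ a ha] at hκc; exact hκb hκc.symm)
    have q1 : pos a < pos (τ b) := by
      by_contra hh
      apply hκb
      have := hnc (τ b) hcE a ha b hbE (τ a) (ht' a ha) (by omega) (by unfold cyc at c1; omega)
        (by unfold cyc at c1; omega) hκc (hκ a ha).symm
      rw [← this, hκc]
    have q2 : pos (τ b) < pos (τ a) := by
      by_contra hh
      apply hκb
      have := hnc a ha b hbE (τ a) (ht' a ha) (τ b) hcE (by unfold cyc at c1; omega)
        (by unfold cyc at c1; omega) (by omega) (hκ a ha).symm hκc.symm
      rw [← this]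
    have q3 : pos (τ b) < pos b := by
      by_contra hh
      have := hmin' b hbE (by omega)
      unfold cyc at c1
      omega
    have hfc := hfx _ hcE
    have hκd := hκ _ hcE
    have p4 := hpne _ (ht' _ hcE) _ hcE hfc
    have q4 : pos (τ b) < pos (τ (τ b)) ∧ pos (τ (τ b)) ≤ pos b := by
      by_cases e : τ (τ b) = b
      · rw [e]; omega
      · have := hτ b hbE _ (ht' _ hcE) (by rw [hκd, hκc]) e hfc
        unfold cyc at this
        omega
    have := hmin' _ hcE q4.1
    unfold cyc at c1
    omega

/-- `f` acts on `E` as a full cycle of length `m` with positions `pos`. -/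
structure IsCyc (f : α → α) (E : Set α) (pos : α → ℕ) (m : ℕ) : Prop where
  maps : ∀ z ∈ E, f z ∈ E
  inj : Set.InjOn pos E
  lt : ∀ z ∈ E, pos z < m
  step : ∀ z ∈ E, pos (f z) = if pos z + 1 < m then pos z + 1 else 0

theorem IsCyc.ret {f : α → α} {E : Set α} {pos : α → ℕ} {m : ℕ} (hf : IsCyc f E pos m)
    {B : Set α} (hB : B ⊆ E) {b c d : α} (hd : d ∈ B) (h : Ret f B b c) (hb : b ∈ E)
    (hdb : d ≠ b) (hdc : d ≠ c) : cyc (pos b) (pos c) (pos d) := by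
  have hpd := hf.lt d (hB hd)
  induction h with
  | base b h =>
    have h1 := hf.step b hb
    have h2 : pos d ≠ pos b := fun e => hdb (hf.inj (hB hd) hb e)
    have h3 : pos d ≠ pos (f b) := fun e => hdc (hf.inj (hB hd) (hB h) e)
    have h4 := hf.lt b hb
    unfold cyc
    split_ifs at h1 <;> omega
  | step b c h h' ih =>
    have ih := ih (hf.maps b hb) (by rintro rfl; exact h hd) hdc
    have h1 := hf.step b hb
    have h2 : pos d ≠ pos b := fun e => hdb (hf.inj (hB hd) hb e)
    have h4 := hf.lt b hb
    have h5 := hf.lt c (hB h'.mem)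
    unfold cyc at *
    split_ifs at h1 <;> omega

theorem IsCyc.ret_of {π : Perm α} {E : Set α} {pos : α → ℕ} {m : ℕ} (hf : IsCyc π E pos m)
    {B : Set α} (hB : B ⊆ E) {b c : α} (hb : b ∈ B) (hc : c ∈ B) (hbc : b ≠ c)
    (h : ∀ d ∈ B, d ≠ b → d ≠ c → cyc (pos b) (pos c) (pos d)) : induced π B b = c := by
  rw [induced_iff π hb]
  obtain ⟨w, hw⟩ := exists_ret π hb
  by_cases hwc : w = c
  · rwa [← hwc]
  exfalso
  have h1 := hf.ret hB hc hw (hB hb) hbc.symm (Ne.symm hwc)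
  by_cases hwb : w = b
  · rw [hwb] at h1
    unfold cyc at h1
    omega
  · have h2 := h w hw.mem hwb hwc
    unfold cyc at *
    omega

theorem IsCyc.cyc3 {π : Perm α} {E : Set α} {pos : α → ℕ} {m : ℕ} (hf : IsCyc π E pos m)
    {a b c : α} (ha : a ∈ E) (hb : b ∈ E) (hc : c ∈ E) 
    (h : cyc (pos a) (pos b) (pos c)) : MapsCyc3 π {a, b, c} a b c := by
  have hB : ({a, b, c} : Set α) ⊆ E := by
    rintro z (rfl | rfl | rfl) <;> assumption
  have n1 : a ≠ b := by rintro rfl; unfold cyc at h; omega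
  have n2 : a ≠ c := by rintro rfl; unfold cyc at h; omega
  have n3 : b ≠ c := by rintro rfl; unfold cyc at h; omega
  refine ⟨?_, ?_, ?_⟩
  · apply hf.ret_of hB (by simp) (by simp) n1
    rintro d (rfl | rfl | rfl) <;> simp_all
  · apply hf.ret_of hB (by simp) (by simp) n3
    rintro d (rfl | rfl | rfl) <;> simp_all [cyc]
    omega
  · apply hf.ret_of hB (by simp) (by simp) n2.symm
    rintro d (rfl | rfl | rfl) <;> simp_all [cyc]
    omega

theorem IsCyc.of_cyc3 {π : Perm α} {E : Set α} {pos : α → ℕ} {m : ℕ} (hf : IsCyc π E pos m)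
    {a b c : α} (ha : a ∈ E) (hb : b ∈ E) (hc : c ∈ E) (n2 : c ≠ a) (n3 : c ≠ b)
    (h : MapsCyc3 π {a, b, c} a b c) : cyc (pos a) (pos b) (pos c) := by
  have hB : ({a, b, c} : Set α) ⊆ E := by
    rintro z (rfl | rfl | rfl) <;> assumption
  exact hf.ret hB (by simp) ((induced_iff π (by simp)).1 h.1) ha n2 n3

theorem IsCyc.cyc4 {π : Perm α} {E : Set α} {pos : α → ℕ} {m : ℕ} (hf : IsCyc π E pos m)
    {a b c d : α} (ha : a ∈ E) (hb : b ∈ E) (hc : c ∈ E) (hd : d ∈ E)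
    (h : cyc (pos a) (pos b) (pos c)) (h' : cyc (pos a) (pos c) (pos d)) :
    MapsCyc4 π {a, b, c, d} a b c d := by
  have hB : ({a, b, c, d} : Set α) ⊆ E := by
    rintro z (rfl | rfl | rfl | rfl) <;> assumption
  have n1 : a ≠ b := by rintro rfl; unfold cyc at h; omega
  have n3 : b ≠ c := by rintro rfl; unfold cyc at h; omega
  have n4 : c ≠ d := by rintro rfl; unfold cyc at h'; omega
  have n5 : d ≠ a := by rintro rfl; unfold cyc at h'; omega
  refine ⟨?_, ?_, ?_, ?_⟩
  · apply hf.ret_of hB (by simp) (by simp) n1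
    rintro e (rfl | rfl | rfl | rfl) h1 h2 <;> first | contradiction | (unfold cyc at *; omega)
  · apply hf.ret_of hB (by simp) (by simp) n3
    rintro e (rfl | rfl | rfl | rfl) h1 h2 <;> first | contradiction | (unfold cyc at *; omega)
  · apply hf.ret_of hB (by simp) (by simp) n4
    rintro e (rfl | rfl | rfl | rfl) h1 h2 <;> first | contradiction | (unfold cyc at *; omega)
  · apply hf.ret_of hB (by simp) (by simp) n5
    rintro e (rfl | rfl | rfl | rfl) h1 h2 <;> first | contradiction | (unfold cyc at *; omega)

theorem IsCyc.of_cyc4 {π : Perm α} {E : Set α} {pos : α → ℕ} {m : ℕ} (hf : IsCyc π E pos m)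
    {a b c d : α} (ha : a ∈ E) (hb : b ∈ E) (hc : c ∈ E) (hd : d ∈ E)
    (hn : List.Pairwise (· ≠ ·) [a, b, c, d])
    (h : MapsCyc4 π {a, b, c, d} a b c d) :
    cyc (pos a) (pos b) (pos c) ∧ cyc (pos a) (pos c) (pos d) := by
  have hB : ({a, b, c, d} : Set α) ⊆ E := by
    rintro z (rfl | rfl | rfl | rfl) <;> assumption
  simp at hn
  obtain ⟨⟨n1, n2, n3⟩, ⟨n4, n5⟩, n6⟩ := hn
  have h1 := hf.ret hB (d := c) (by simp) ((induced_iff π (by simp)).1 h.1) ha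
    (Ne.symm n2) (Ne.symm n4)
  have h2 := hf.ret hB (d := a) (by simp) ((induced_iff π (by simp)).1 h.2.2.1) hc n2 n3
  unfold cyc at *
  omega

end Returns

/-! ### The annular permutations -/

section Annular

set_option linter.unusedSectionVars false

theorem isCyc_formPerm {α : Type*} [DecidableEq α] (L : List α) (pos : α → ℕ)
    (h : ∀ i (hi : i < L.length), pos L[i] = i) :
    IsCyc L.formPerm {z | z ∈ L} pos L.length := by
  have hnd : L.Nodup := by
    rw [List.nodup_iff_injective_getElem]
    rintro ⟨i, hi⟩ ⟨j, hj⟩ hij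
    have h1 := h i hi
    have h2 := h j hj
    simp only at hij
    rw [hij] at h1
    simp only [Fin.mk.injEq]
    omega
  refine ⟨?_, ?_, ?_, ?_⟩
  · intro z hz
    exact List.formPerm_apply_mem_of_mem hz
  · intro z hz w hw hzw
    obtain ⟨i, hi, rfl⟩ := List.getElem_of_mem hz
    obtain ⟨j, hj, rfl⟩ := List.getElem_of_mem hw
    rw [h i hi, h j hj] at hzw
    subst hzw
    rfl
  · intro z hz
    obtain ⟨i, hi, rfl⟩ := List.getElem_of_mem hz
    rw [h i hi]
    exact hi
  · intro z hz
    obtain ⟨i, hi, rfl⟩ := List.getElem_of_mem hz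
    rw [List.formPerm_apply_getElem L hnd i hi, h _ _, h i hi]
    split_ifs with h1
    · exact Nat.mod_eq_of_lt h1
    · have : i + 1 = L.length := by omega
      rw [this, Nat.mod_self]

variable {p q : ℕ}

theorem gammaExt_val (z : Fin (p + q)) (hz : (z : ℕ) < p) :
    ((gammaExt p q z : Fin (p + q)) : ℕ) = if (z : ℕ) + 1 < p then (z : ℕ) + 1 else 0 := by
  have hl : ((List.finRange (p + q)).take p).length = p := by simp
  have h := isCyc_formPerm ((List.finRange (p + q)).take p) (fun z => (z : ℕ)) (by
    intro i hi
    simp)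
  rw [hl] at h
  exact h.step z (by
    simp only [Set.mem_ofPred_eq, List.mem_iff_getElem]
    exact ⟨z, by omega, by simp⟩)

theorem gammaExt_fix (z : Fin (p + q)) (hz : p ≤ (z : ℕ)) : gammaExt p q z = z := by
  apply List.formPerm_apply_of_notMem
  intro h
  obtain ⟨i, hi, rfl⟩ := List.getElem_of_mem h
  simp at hi hz
  omega

theorem gammaInt_val (z : Fin (p + q)) (hz : p ≤ (z : ℕ)) :
    ((gammaInt p q z : Fin (p + q)) : ℕ) = if (z : ℕ) + 1 < p + q then (z : ℕ) + 1 else p := by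
  have hl : ((List.finRange (p + q)).drop p).length = q := by simp
  have h := isCyc_formPerm ((List.finRange (p + q)).drop p) (fun z => (z : ℕ) - p) (by
    intro i hi
    simp)
  rw [hl] at h
  have hm : z ∈ (List.finRange (p + q)).drop p := by
    simp only [List.mem_iff_getElem]
    exact ⟨z - p, by omega, by ext; simp; omega⟩
  have h1 := h.step z hm
  have h2 := h.maps z hm
  obtain ⟨i, hi, h2⟩ := List.getElem_of_mem h2
  have h3 := congrArg Fin.val h2
  simp at h3
  change (_ : ℕ) = ((gammaInt p q z : Fin (p + q)) : ℕ) at h3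
  change ((gammaInt p q z : Fin (p + q)) : ℕ) - p = _ at h1
  split_ifs at h1 ⊢ <;> omega

theorem gammaInt_fix (z : Fin (p + q)) (hz : (z : ℕ) < p) : gammaInt p q z = z := by
  apply List.formPerm_apply_of_notMem
  intro h
  obtain ⟨i, hi, rfl⟩ := List.getElem_of_mem h
  simp at hi hz

theorem gammaAnn_ext (z : Fin (p + q)) (hz : (z : ℕ) < p) : gammaAnn p q z = gammaExt p q z := by
  rw [gammaAnn, Perm.mul_apply, gammaInt_fix z hz]

theorem gammaAnn_int (z : Fin (p + q)) (hz : p ≤ (z : ℕ)) : gammaAnn p q z = gammaInt p q z := by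
  rw [gammaAnn, Perm.mul_apply, gammaExt_fix]
  rw [gammaInt_val z hz]
  split_ifs <;> omega

theorem gammaAnn_val (z : Fin (p + q)) : ((gammaAnn p q z : Fin (p + q)) : ℕ) =
    if (z : ℕ) < p then (if (z : ℕ) + 1 < p then (z : ℕ) + 1 else 0) else
      (if (z : ℕ) + 1 < p + q then (z : ℕ) + 1 else p) := by
  split_ifs with h <;> first
    | rw [gammaAnn_ext z h, gammaExt_val z h]
    | rw [gammaAnn_int z (by omega), gammaInt_val z (by omega)]
  all_goals split_ifs; rfl

theorem gammaAnn_lt (z : Fin (p + q)) :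
    ((gammaAnn p q z : Fin (p + q)) : ℕ) < p ↔ (z : ℕ) < p := by
  rw [gammaAnn_val]
  split_ifs <;> omega

/-- Position of `z` in the order `γ u, ..., u, γ v, ..., v`. -/
def po (p q u v z : ℕ) : ℕ :=
  if z < p then (if u < z then z - u - 1 else z + p - u - 1)
  else p + (if v < z then z - v - 1 else z + q - v - 1)

theorem po_ext {u v z : ℕ} (hu : u < p) (hz : z < p) : po p q u v z < p := by
  unfold po
  split_ifs <;> omega

theorem po_int {u v z : ℕ} (hz : p ≤ z) : p ≤ po p q u v z := by
  unfold po
  split_ifs <;> omega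

theorem po_lt {u v z : ℕ} (hu : u < p) (hv : p ≤ v) (hv' : v < p + q) (hz' : z < p + q) :
    po p q u v z < p + q := by
  unfold po
  split_ifs <;> omega

theorem po_inj {u v z w : ℕ} (hu : u < p) (hv : p ≤ v) (hv' : v < p + q) 
    (hz' : z < p + q) (hw' : w < p + q) (h : po p q u v z = po p q u v w) : z = w := by
  unfold po at h
  split_ifs at h <;> omega

theorem isCyc_full (u v : Fin (p + q)) (hu : (u : ℕ) < p) (hv : p ≤ (v : ℕ)) :
    IsCyc (gammaAnn p q * swap u v : Perm (Fin (p + q))) Set.univ (fun z => po p q u v z) (p + q) := by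
  refine ⟨by simp, ?_, ?_, ?_⟩
  · intro z _ w _ h
    exact Fin.ext (po_inj hu hv v.2 z.2 w.2 h)
  · intro z _
    exact po_lt hu hv v.2 z.2
  · intro z _
    have hu' := u.2
    have hv' := v.2
    have hz' := z.2
    rw [Perm.mul_apply]
    have hn : (z : ℕ) ≠ u ∧ (z : ℕ) ≠ v ∨ z = u ∨ z = v := by
      by_cases h1 : z = u
      · tauto
      · by_cases h2 : z = v
        · tauto
        · left
          exact ⟨fun e => h1 (Fin.ext e), fun e => h2 (Fin.ext e)⟩
    rcases hn with ⟨h1, h2⟩ | rfl | rfl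
    · rw [swap_apply_of_ne_of_ne (fun e => h1 (congrArg _ e)) (fun e => h2 (congrArg _ e))]
      simp only [gammaAnn_val]
      unfold po
      split_ifs <;> omega
    · rw [swap_apply_left]
      simp only [gammaAnn_val]
      unfold po
      split_ifs <;> omega
    · rw [swap_apply_right]
      simp only [gammaAnn_val]
      unfold po
      split_ifs <;> omega

theorem isCyc_ext (f : Fin (p + q) → Fin (p + q)) 
    (hf : ∀ z : Fin (p + q), (z : ℕ) < p → f z = gammaExt p q z)
    (u v : Fin (p + q)) (hu : (u : ℕ) < p) (hv : p ≤ (v : ℕ)) :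
    IsCyc f (extSet p q) (fun z => po p q u v z) p := by
  have hfv : ∀ z : Fin (p + q), (z : ℕ) < p → (f z : ℕ) = if (z : ℕ) + 1 < p then (z : ℕ) + 1 else 0 := by
    intro z hz
    rw [hf z hz, gammaExt_val z hz]
  refine ⟨?_, ?_, ?_, ?_⟩
  · intro z (hz : (z : ℕ) < p)
    change (f z : ℕ) < p
    rw [hfv z hz]
    split_ifs <;> omega
  · intro z _ w _ h
    exact Fin.ext (po_inj hu hv v.2 z.2 w.2 h)
  · intro z (hz : (z : ℕ) < p)
    exact po_ext hu hz
  · intro z (hz : (z : ℕ) < p)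
    simp only [hfv z hz]
    unfold po
    split_ifs <;> omega

theorem isCyc_int (f : Fin (p + q) → Fin (p + q)) 
    (hf : ∀ z : Fin (p + q), p ≤ (z : ℕ) → f z = gammaInt p q z)
    (u v : Fin (p + q)) (hu : (u : ℕ) < p) (hv : p ≤ (v : ℕ)) :
    IsCyc f (intSet p q) (fun z => po p q u v z - p) q := by
  have hfv : ∀ z : Fin (p + q), p ≤ (z : ℕ) → (f z : ℕ) =
      if (z : ℕ) + 1 < p + q then (z : ℕ) + 1 else p := by
    intro z hz
    rw [hf z hz, gammaInt_val z hz]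
  refine ⟨?_, ?_, ?_, ?_⟩
  · intro z (hz : p ≤ (z : ℕ))
    change p ≤ (f z : ℕ)
    rw [hfv z hz]
    split_ifs <;> omega
  · intro z (hz : p ≤ (z : ℕ)) w (hw : p ≤ (w : ℕ)) h
    have h1 := po_int (q := q) (u := u) (v := v) hz
    have h2 := po_int (q := q) (u := u) (v := v) hw
    exact Fin.ext (po_inj hu hv v.2 z.2 w.2 (by simp only at h; omega))
  · intro z (hz : p ≤ (z : ℕ))
    have h1 := po_int (q := q) (u := u) (v := v) hz
    have h2 := po_lt hu hv v.2 z.2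
    omega
  · intro z (hz : p ≤ (z : ℕ))
    have := z.2
    have := v.2
    simp only [hfv z hz]
    unfold po
    split_ifs <;> omega

theorem gammaExt_pow (x : Fin (p + q)) (hx : (x : ℕ) < p) (k : ℕ) (hk : k < p) :
    (((gammaExt p q ^ k : Perm (Fin (p + q))) x : Fin (p + q)) : ℕ) = if (x : ℕ) + k < p then (x : ℕ) + k else x + k - p := by
  induction k with
  | zero => simp <;> omega
  | succ k ih =>
    have ih := ih (by omega)
    rw [pow_succ', Perm.mul_apply, gammaExt_val, ih]
    · split_ifs <;> omega
    · rw [ih]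
      split_ifs <;> omega

theorem gammaInt_pow (x : Fin (p + q)) (hx : p ≤ (x : ℕ)) (k : ℕ) (hk : k < q) :
    (((gammaInt p q ^ k : Perm (Fin (p + q))) x : Fin (p + q)) : ℕ) = if (x : ℕ) + k < p + q then (x : ℕ) + k else x + k - q := by
  have hx' := x.2
  induction k with
  | zero => simp <;> omega
  | succ k ih =>
    have ih := ih (by omega)
    rw [pow_succ', Perm.mul_apply, gammaInt_val, ih]
    · split_ifs <;> omega
    · rw [ih]
      split_ifs <;> omega

theorem isCyc_lam (x y : Fin (p + q)) (hx : (x : ℕ) < p) (hy : p ≤ (y : ℕ)) :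
    IsCyc (lamPerm p q x y) {x, y}ᶜ 
      (fun z => if (z : ℕ) < p then po p q x y z else po p q x y z - 1) (p - 1 + (q - 1)) := by
  have hx' := x.2
  have hy' := y.2
  have h := isCyc_formPerm (((List.range (p - 1)).map fun k => (gammaExt p q ^ (k + 1)) x) ++
    ((List.range (q - 1)).map fun k => (gammaInt p q ^ (k + 1)) y))
    (fun z => if (z : ℕ) < p then po p q x y z else po p q x y z - 1) (by
      intro i hi
      simp only [List.length_append, List.length_map, List.length_range] at hi
      rw [List.getElem_append]
      by_cases h1 : i < (List.map (fun k => (gammaExt p q ^ (k + 1)) x) (List.range (p - 1))).length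
      · rw [dif_pos h1]
        simp only [List.length_map, List.length_range] at h1
        simp only [List.getElem_map, List.getElem_range]
        rw [gammaExt_pow x hx (i + 1) (by omega)]
        unfold po
        split_ifs <;> omega
      · rw [dif_neg h1]
        simp only [List.length_map, List.length_range] at h1
        simp only [List.getElem_map, List.getElem_range, List.length_map, List.length_range]
        rw [gammaInt_pow y hy (i - (p - 1) + 1) (by omega)]
        unfold po
        split_ifs <;> omega)
  have hE : {z | z ∈ (((List.range (p - 1)).map fun k => (gammaExt p q ^ (k + 1)) x) ++
    ((List.range (q - 1)).map fun k => (gammaInt p q ^ (k + 1)) y))} = ({x, y}ᶜ : Set (Fin (p + q))) := by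
    ext z
    have hz' := z.2
    simp only [List.mem_append, List.mem_map, List.mem_range, Set.mem_ofPred_eq, Set.mem_compl_iff,
      Set.mem_insert_iff, Set.mem_singleton_iff, not_or]
    constructor
    · rintro (⟨k, hk, rfl⟩ | ⟨k, hk, rfl⟩)
      · have := gammaExt_pow x hx (k + 1) (by omega)
        constructor <;> intro e <;> rw [e] at this <;> split_ifs at this <;> omega
      · have := gammaInt_pow y hy (k + 1) (by omega)
        constructor <;> intro e <;> rw [e] at this <;> split_ifs at this <;> omega
    · rintro ⟨h1, h2⟩
      have h1 : (z : ℕ) ≠ x := fun e => h1 (Fin.ext e)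
      have h2 : (z : ℕ) ≠ y := fun e => h2 (Fin.ext e)
      by_cases hz : (z : ℕ) < p
      · left
        by_cases hxz : (x : ℕ) < z
        · refine ⟨z - x - 1, by omega, Fin.ext ?_⟩
          rw [gammaExt_pow x hx _ (by omega)]
          split_ifs <;> omega
        · refine ⟨z + p - x - 1, by omega, Fin.ext ?_⟩
          rw [gammaExt_pow x hx _ (by omega)]
          split_ifs <;> omega
      · right
        by_cases hxz : (y : ℕ) < z
        · refine ⟨z - y - 1, by omega, Fin.ext ?_⟩
          rw [gammaInt_pow y hy _ (by omega)]
          split_ifs <;> omega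
        · refine ⟨z + q - y - 1, by omega, Fin.ext ?_⟩
          rw [gammaInt_pow y hy _ (by omega)]
          split_ifs <;> omega
  rw [hE] at h
  simp only [List.length_append, List.length_map, List.length_range] at h
  exact h

end Annular

section Transfer

set_option linter.unusedSectionVars false

variable {p q : ℕ}

theorem side_of_sameCycle {π : Perm (Fin (p + q))} (h : ∀ z, (π z : ℕ) < p ↔ (z : ℕ) < p)
    {a b : Fin (p + q)} (hs : π.SameCycle a b) : (a : ℕ) < p ↔ (b : ℕ) < p := by
  obtain ⟨n, rfl⟩ := hs.exists_nat_pow_eq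
  induction n with
  | zero => simp
  | succ n ih =>
    rw [pow_succ', Perm.mul_apply, h]
    exact ih ⟨n, by simp⟩

theorem side_inv {π : Perm (Fin (p + q))} (h : ∀ z, (π z : ℕ) < p ↔ (z : ℕ) < p) (z) :
    ((π⁻¹ z : Fin (p + q)) : ℕ) < p ↔ (z : ℕ) < p := by
  rw [← h, ← Perm.mul_apply, mul_inv_cancel, Perm.one_apply]

theorem middle {τ : Perm (Fin (p + q))} {u v : Fin (p + q)} (hu : (u : ℕ) < p) (hv : p ≤ (v : ℕ))
    (h : Good τ (gammaAnn p q * swap u v)) : ∃ u' v' : Fin (p + q), (u' : ℕ) < p ∧ p ≤ (v' : ℕ) ∧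
      Good (τ⁻¹ * gammaAnn p q) (gammaAnn p q * swap u' v') := by
  have hm : ∀ (π : Perm (Fin (p + q))), (∀ z, (π z : ℕ) < p ↔ (z : ℕ) < p) →
      ∀ u v : Fin (p + q), (u : ℕ) < p → p ≤ (v : ℕ) → dm (π * swap u v) + 1 ≤ dm π := by
    intro π hπ u v hu hv
    refine dm_merge π (Finset.univ.filter fun z => (z : ℕ) < p) ?_ ?_ ?_
    · intro z; simp [hπ]
    · simpa using hu
    · simpa using hv
  have hk := dm_conj τ (gammaAnn p q)
  have h0 := dm_mul_swap (gammaAnn p q) u v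
  have e : ∀ t : Perm (Fin (p + q)), (τ⁻¹ * gammaAnn p q)⁻¹ * (gammaAnn p q * t) =
      ((gammaAnn p q)⁻¹ * τ * gammaAnn p q) * t := by intro t; group
  unfold Good at *
  simp only [e]
  rw [← mul_assoc] at h
  by_cases hc : ∃ a : Fin (p + q), (a : ℕ) < p ∧ p ≤ (τ a : ℕ)
  · obtain ⟨a, ha, hta⟩ := hc
    have hκ : ((gammaAnn p q)⁻¹ * τ * gammaAnn p q) ((gammaAnn p q)⁻¹ a) = (gammaAnn p q)⁻¹ (τ a) := by
      simp [Perm.mul_apply]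
    have g1 := side_inv (gammaAnn_lt (p := p) (q := q)) a
    have g2 := side_inv (gammaAnn_lt (p := p) (q := q)) (τ a)
    refine ⟨(gammaAnn p q)⁻¹ a, (gammaAnn p q)⁻¹ (τ a), g1.2 ha, by omega, ?_⟩
    have h1 := dm_split ((gammaAnn p q)⁻¹ * τ * gammaAnn p q) (u := (gammaAnn p q)⁻¹ a) (by
      rw [hκ]
      intro e
      rw [e] at g2
      omega)
    rw [hκ] at h1
    have h2 := hm (gammaAnn p q) gammaAnn_lt ((gammaAnn p q)⁻¹ a) ((gammaAnn p q)⁻¹ (τ a)) (g1.2 ha) (by omega)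
    have h3 := dm_mul_swap' (τ⁻¹ * gammaAnn p q) u v
    omega
  · push Not at hc
    have hτ : ∀ z : Fin (p + q), (τ z : ℕ) < p ↔ (z : ℕ) < p := by
      have hs := Finset.surjOn_of_injOn_of_card_le (s := Finset.univ.filter fun z : Fin (p + q) => (z : ℕ) < p)
        (t := Finset.univ.filter fun z : Fin (p + q) => (z : ℕ) < p) τ (by
          intro z hz
          simp only [Finset.coe_filter, Finset.mem_univ, true_and, Set.mem_ofPred_eq] at hz ⊢
          exact hc z hz) τ.injective.injOn le_rfl
      intro z
      constructor
      · intro hz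
        obtain ⟨w, hw, e⟩ := hs (show τ z ∈ _ by simpa using hz)
        have := τ.injective e
        rw [← this]
        simpa using hw
      · exact hc z
    refine ⟨u, v, hu, hv, ?_⟩
    have h1 := hm (τ⁻¹ * gammaAnn p q) (by
      intro z
      rw [Perm.mul_apply, side_inv hτ, gammaAnn_lt]) u v hu hv
    have h2 := dm_mul_swap ((gammaAnn p q)⁻¹ * τ * gammaAnn p q) u v
    have h3 := hm (gammaAnn p q) gammaAnn_lt u v hu hv
    omega

/-- Position in the order given by `lamPerm`. -/
def pl (p q x y z : ℕ) : ℕ := if z < p then po p q x y z else po p q x y z - 1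

theorem pl_ext {u v x y z : ℕ} (hu : u < p) (hx : x < p) (hz : z < p) (hzx : z ≠ x) :
    po p q u v x < p ∧ po p q u v z < p ∧ pl p q x y z < p - 1 ∧
    (po p q u v x < po p q u v z ∧ pl p q x y z + po p q u v x + 1 = po p q u v z ∨
     po p q u v z < po p q u v x ∧ pl p q x y z + po p q u v x + 1 = po p q u v z + p) := by
  simp only [pl, po, hx, hz, if_true]
  split_ifs <;> omega

theorem pl_int {u v x y z : ℕ} (hv : p ≤ v) (hv' : v < p + q) (hy : p ≤ y) (hy' : y < p + q)
    (hz : p ≤ z) (hz' : z < p + q) (hzy : z ≠ y) (hp : 0 < p) :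
    p ≤ po p q u v y ∧ p ≤ po p q u v z ∧ po p q u v y < p + q ∧ po p q u v z < p + q ∧ p - 1 ≤ pl p q x y z ∧
    (po p q u v y < po p q u v z ∧ pl p q x y z + po p q u v y + 2 = po p q u v z + p ∨
     po p q u v z < po p q u v y ∧ pl p q x y z + po p q u v y + 2 = po p q u v z + q + p) := by
  simp only [pl, po, not_lt.2 hy, not_lt.2 hz, if_false]
  split_ifs <;> omega

theorem lam_lt {u v x y z w : ℕ} (hu : u < p) (hv : p ≤ v) (hv' : v < p + q) (hx : x < p)
    (hy : p ≤ y) (hy' : y < p + q) (hz' : z < p + q) (hw' : w < p + q)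
    (hzx : z ≠ x) (hzy : z ≠ y) (hwx : w ≠ x) (hwy : w ≠ y)
    (h : (po p q u v x < po p q u v z ∧ po p q u v z < po p q u v y) ↔
      (po p q u v x < po p q u v w ∧ po p q u v w < po p q u v y)) :
    pl p q x y z < pl p q x y w ↔ po p q u v z < po p q u v w := by
  have ix := po_ext (q := q) (v := v) hu hx
  have iy := po_int (q := q) (u := u) (v := v) hy
  have hp : 0 < p := by omega
  by_cases h1 : z < p
  · have a1 := pl_ext (q := q) (v := v) (y := y) hu hx h1 hzx
    by_cases h2 : w < p
    · have a2 := pl_ext (q := q) (v := v) (y := y) hu hx h2 hwx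
      omega
    · have a2 := pl_int (u := u) (x := x) hv hv' hy hy' (not_lt.1 h2) hw' hwy hp
      omega
  · have a1 := pl_int (u := u) (x := x) hv hv' hy hy' (not_lt.1 h1) hz' hzy hp
    by_cases h2 : w < p
    · have a2 := pl_ext (q := q) (v := v) (y := y) hu hx h2 hwx
      omega
    · have a2 := pl_int (u := u) (x := x) hv hv' hy hy' (not_lt.1 h2) hw' hwy hp
      omega

theorem lam_opp {u v x y z w : ℕ} (hu : u < p) (hv : p ≤ v) (hv' : v < p + q) (hx : x < p)
    (hy : p ≤ y) (hy' : y < p + q) (hz' : z < p + q) (hw' : w < p + q)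
    (hzx : z ≠ x) (hzy : z ≠ y) (hwx : w ≠ x) (hwy : w ≠ y)
    (h : po p q u v x < po p q u v z ∧ po p q u v z < po p q u v y) 
    (h' : ¬ (po p q u v x < po p q u v w ∧ po p q u v w < po p q u v y)) :
    pl p q x y z < pl p q x y w ↔ z < p := by
  have ix := po_ext (q := q) (v := v) hu hx
  have iy := po_int (q := q) (u := u) (v := v) hy
  have hp : 0 < p := by omega
  by_cases h1 : z < p
  · have a1 := pl_ext (q := q) (v := v) (y := y) hu hx h1 hzx
    by_cases h2 : w < p
    · have a2 := pl_ext (q := q) (v := v) (y := y) hu hx h2 hwx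
      omega
    · have a2 := pl_int (u := u) (x := x) hv hv' hy hy' (not_lt.1 h2) hw' hwy hp
      omega
  · have a1 := pl_int (u := u) (x := x) hv hv' hy hy' (not_lt.1 h1) hz' hzy hp
    by_cases h2 : w < p
    · have a2 := pl_ext (q := q) (v := v) (y := y) hu hx h2 hwx
      omega
    · have a2 := pl_int (u := u) (x := x) hv hv' hy hy' (not_lt.1 h2) hw' hwy hp
      omega

end Transfer

section PartTwo

set_option linter.unusedSectionVars false

variable {p q : ℕ}

/-- Abbreviation for positions. -/
theorem po_ne {u v z w : Fin (p + q)} (hu : (u : ℕ) < p) (hv : p ≤ (v : ℕ)) (h : z ≠ w) :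
    po p q u v z ≠ po p q u v w := fun e => h (Fin.ext (po_inj hu hv v.2 z.2 w.2 e))

theorem good_std {σ : Perm (Fin (p + q))} {u v : Fin (p + q)} (hu : (u : ℕ) < p)
    (hv : p ≤ (v : ℕ)) (h : Good σ (gammaAnn p q * swap u v)) {B : Set (Fin (p + q))}
    {a b c : Fin (p + q)} (ha : a ∈ B) (hr : Ret σ B a b) (hc : c ∈ B) (hs : σ.SameCycle a c)
    (hca : c ≠ a) (hcb : c ≠ b) : cyc (po p q u v a) (po p q u v b) (po p q u v c) := by
  have hba : b ≠ a := ret_ne σ hc hca hs hr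
  by_contra hn
  have p1 := po_ne hu hv hca
  have p2 := po_ne hu hv hcb
  have p3 := po_ne hu hv hba
  have hc' : cyc (po p q u v a) (po p q u v c) (po p q u v b) := by
    unfold cyc at *
    omega
  have hf := isCyc_full u v hu hv
  refine good_no3 h hca.symm (hf.cyc3 (by simp) (by simp) (by simp) hc') ?_
  apply mapsCyc3_of σ hba.symm hca.symm hcb.symm (by simp) (by simp) (by simp) ?_ hr.sameCycle hs
  · exact hr.mono (by rintro z (rfl | rfl | rfl); exacts [ha, hc, hr.mem]) (by simp)
  · rintro z (rfl | rfl | rfl) <;> simp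

theorem good_nc {σ : Perm (Fin (p + q))} {u v : Fin (p + q)} (hu : (u : ℕ) < p)
    (hv : p ≤ (v : ℕ)) (h : Good σ (gammaAnn p q * swap u v))
    {a b c d : Fin (p + q)} (h1 : cyc (po p q u v a) (po p q u v b) (po p q u v c))
    (h2 : cyc (po p q u v a) (po p q u v c) (po p q u v d))
    (hac : σ.SameCycle a c) (hbd : σ.SameCycle b d) (hab : ¬ σ.SameCycle a b) : False := by
  have n1 : a ≠ c := by rintro rfl; unfold cyc at h1; omega
  have n2 : b ≠ d := by rintro rfl; unfold cyc at h1 h2; omega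
  have hf := isCyc_full u v hu hv
  refine good_no4 h n1 (hf.cyc4 (by simp) (by simp) (by simp) (by simp) h1 h2) ?_
  apply mapsSwap2_of σ n1 n2 (by simp) (by simp) (by simp) (by simp) ?_ ?_ hac hbd
  · rintro z (rfl | rfl | rfl | rfl) hz
    · simp
    · exact absurd hz hab
    · simp
    · exact absurd (hz.trans hbd.symm) hab
  · rintro z (rfl | rfl | rfl | rfl) hz
    · exact absurd hz.symm hab
    · simp
    · exact absurd (hac.trans hz.symm) hab
    · simp

theorem std_side {σ : Perm (Fin (p + q))} {u v : Fin (p + q)} (hu : (u : ℕ) < p)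
    (hv : p ≤ (v : ℕ)) (h : Good σ (gammaAnn p q * swap u v)) (g : Perm (Fin (p + q)))
    (S : Set (Fin (p + q))) (pos : Fin (p + q) → ℕ) (m : ℕ) (hg : IsCyc g S pos m)
    (hpos : ∀ a ∈ S, ∀ b ∈ S, ∀ c ∈ S, cyc (pos a) (pos b) (pos c) →
      cyc (po p q u v a) (po p q u v b) (po p q u v c))
    (A : Set (Fin (p + q))) (hA : IsOrbit σ A) (b : Fin (p + q)) (hb : b ∈ A ∩ S) :
    induced σ (A ∩ S) b = induced g (A ∩ S) b := by
  obtain ⟨a0, rfl⟩ := hA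
  have r1 := ret_induced σ hb
  have r2 := ret_induced g hb
  generalize induced σ _ b = c1 at r1 ⊢
  generalize induced g _ b = c2 at r2 ⊢
  by_contra hne
  have m1 := r1.mem
  have m2 := r2.mem
  have hs : σ.SameCycle b c2 := Perm.SameCycle.trans (Perm.SameCycle.symm hb.1) m2.1
  have hs1 : σ.SameCycle b c1 := Perm.SameCycle.trans (Perm.SameCycle.symm hb.1) m1.1
  by_cases e : c1 = b
  · have : c2 ≠ b := fun e' => hne (e.trans e'.symm)
    exact ret_ne σ m2 this hs r1 e
  have k1 := hpos _ hb.2 _ m2.2 _ m1.2 (hg.ret Set.inter_subset_right m1 r2 hb.2 e hne)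
  have e2 : c2 ≠ b := by
    rintro rfl
    unfold cyc at k1
    omega
  have k2 := good_std hu hv h hb r1 m2 hs e2 (Ne.symm hne)
  unfold cyc at *
  omega

theorem exists_exit {σ : Perm (Fin (p + q))} {A S : Set (Fin (p + q))} (hA : IsOrbit σ A)
    (h1 : (A ∩ S).Nonempty) (h2 : (A ∩ Sᶜ).Nonempty) : ∃ a, a ∈ A ∩ S ∧ σ a ∈ Sᶜ := by
  obtain ⟨a0, rfl⟩ := hA
  by_contra hn
  push Not at hn
  obtain ⟨e, he⟩ := h1
  obtain ⟨i, hi⟩ := h2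
  have := ret_closed σ (B := Set.univ) (P := {b | σ.SameCycle a0 b} ∩ S) (by
    intro z hz
    have := hn z hz
    refine ⟨σ z, ⟨?_, by simpa using this⟩, Ret.base z (by simp)⟩
    exact Perm.sameCycle_apply_right.2 hz.1) he (Perm.SameCycle.trans (Perm.SameCycle.symm he.1) hi.1) (by simp)
  exact hi.2 this.2

theorem compl_ext : (extSet p q)ᶜ = intSet p q := by
  ext z
  simp [extSet, intSet]

theorem compl_int : (intSet p q)ᶜ = extSet p q := by
  ext z
  simp [extSet, intSet]

theorem annStandard_of_good {σ : Perm (Fin (p + q))} {u v : Fin (p + q)} (hu : (u : ℕ) < p)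
    (hv : p ≤ (v : ℕ)) (h : Good σ (gammaAnn p q * swap u v)) : AnnStandard p q σ := by
  constructor
  · intro A hA
    constructor
    · refine std_side hu hv h _ _ _ _ (isCyc_ext _ (fun _ _ => rfl) u v hu hv) ?_ A hA
      intro a _ b _ c _ hc
      exact hc
    · refine std_side hu hv h _ _ _ _ (isCyc_int _ (fun _ _ => rfl) u v hu hv) ?_ A hA
      intro a ha b hb c hc hh
      have := po_int (q := q) (u := u) (v := v) (z := a) ha
      have := po_int (q := q) (u := u) (v := v) (z := b) hb
      have := po_int (q := q) (u := u) (v := v) (z := c) hc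
      unfold cyc at *
      omega
  · intro A hA h1 h2
    have key : ∀ (S : Set (Fin (p + q))), (S = extSet p q ∨ S = intSet p q) → 
        ∀ a1 a2, a1 ∈ A ∩ S → a2 ∈ A ∩ S → σ a1 ∈ Sᶜ → a1 ≠ a2 → 
        po p q u v a2 < po p q u v a1 := by
      obtain ⟨a0, rfl⟩ := hA
      intro S hS a1 a2 m1 m2 hs hne
      have k := good_std hu hv h (B := Set.univ) (a := a1) (b := σ a1) (c := a2) (by simp)
        (Ret.base a1 (by simp)) (by simp) (Perm.SameCycle.trans (Perm.SameCycle.symm m1.1) m2.1)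
        hne.symm (by rintro rfl; exact hs m2.2)
      have s1 := m1.2
      have s2 := m2.2
      rcases hS with rfl | rfl
      · rw [compl_ext] at hs
        have := po_int (q := q) (u := u) (v := v) (z := σ a1) hs
        have := po_ext (q := q) (v := v) (z := a1) hu s1
        have := po_ext (q := q) (v := v) (z := a2) hu s2
        unfold cyc at k
        omega
      · rw [compl_int] at hs
        have := po_ext (q := q) (v := v) (z := σ a1) hu hs
        have := po_int (q := q) (u := u) (v := v) (z := a1) s1
        have := po_int (q := q) (u := u) (v := v) (z := a2) s2
        unfold cyc at k
        omega
    have key2 : ∀ (S : Set (Fin (p + q))), (S = extSet p q ∨ S = intSet p q) → 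
        (∃ a, a ∈ A ∩ S ∧ σ a ∈ Sᶜ) → ∃! a, a ∈ A ∩ S ∧ σ a ∈ Sᶜ := by
      rintro S hS ⟨a, ha⟩
      refine ⟨a, ha, ?_⟩
      rintro b hb
      by_contra hne
      have k1 := key S hS a b ha.1 hb.1 ha.2 (Ne.symm hne)
      have k2 := key S hS b a hb.1 ha.1 hb.2 hne
      omega
    have k1 := key2 (extSet p q) (by simp) (exists_exit hA h1 (by rwa [compl_ext]))
    have k2 := key2 (intSet p q) (by simp) (exists_exit hA h2 (by rwa [compl_int]))
    rw [compl_ext] at k1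
    rw [compl_int] at k2
    exact ⟨k1, k2⟩

theorem no_ac1_of_good {σ : Perm (Fin (p + q))} {u v : Fin (p + q)} (hu : (u : ℕ) < p)
    (hv : p ≤ (v : ℕ)) (h : Good σ (gammaAnn p q * swap u v)) : ¬ AC1 p q σ := by
  rintro ⟨a, b, c, d, hn, hγ, hσ⟩
  have hf := isCyc_full u v hu hv
  have sab : (gammaAnn p q).SameCycle a b := by
    have := ret_induced (gammaAnn p q) (B := {a, b, c, d}) (b := a) (by simp)
    rw [hγ.1] at this
    exact this.sameCycle
  have sbc : (gammaAnn p q).SameCycle b c := by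
    have := ret_induced (gammaAnn p q) (B := {a, b, c, d}) (b := b) (by simp)
    rw [hγ.2.1] at this
    exact this.sameCycle
  have scd : (gammaAnn p q).SameCycle c d := by
    have := ret_induced (gammaAnn p q) (B := {a, b, c, d}) (b := c) (by simp)
    rw [hγ.2.2.1] at this
    exact this.sameCycle
  have eab := side_of_sameCycle gammaAnn_lt sab
  have ebc := side_of_sameCycle gammaAnn_lt sbc
  have ecd := side_of_sameCycle gammaAnn_lt scd
  have hac : a ≠ c := by simp at hn; tauto
  have : cyc (po p q u v a) (po p q u v b) (po p q u v c) ∧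
      cyc (po p q u v a) (po p q u v c) (po p q u v d) := by
    by_cases ha : (a : ℕ) < p
    · have hg := isCyc_ext (gammaAnn p q) gammaAnn_ext u v hu hv
      exact hg.of_cyc4 ha (eab.1 ha) (ebc.1 (eab.1 ha)) (ecd.1 (ebc.1 (eab.1 ha))) hn hγ
    · have hg := isCyc_int (gammaAnn p q) gammaAnn_int u v hu hv
      have ia : p ≤ (a : ℕ) := by omega
      have ib : p ≤ (b : ℕ) := by omega
      have ic : p ≤ (c : ℕ) := by omega
      have id : p ≤ (d : ℕ) := by omega
      have k := hg.of_cyc4 ia ib ic id hn hγ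
      have := po_int (q := q) (u := u) (v := v) ia
      have := po_int (q := q) (u := u) (v := v) ib
      have := po_int (q := q) (u := u) (v := v) ic
      have := po_int (q := q) (u := u) (v := v) id
      unfold cyc at *
      omega
  exact good_no4 h hac (hf.cyc4 (by simp) (by simp) (by simp) (by simp) this.1 this.2) hσ

/-- Two points of an orbit lie on the same side of another connecting pair. -/
theorem same_side {σ : Perm (Fin (p + q))} {u v : Fin (p + q)} (hu : (u : ℕ) < p)
    (hv : p ≤ (v : ℕ)) (h : Good σ (gammaAnn p q * swap u v)) {x y z w : Fin (p + q)}
    (hx : (x : ℕ) < p) (hy : p ≤ (y : ℕ)) (hzw : σ.SameCycle z w) (hxy : σ.SameCycle x y)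
    (hn : ¬ σ.SameCycle z x) : 
    (po p q u v x < po p q u v z ∧ po p q u v z < po p q u v y) →
      (po p q u v x < po p q u v w ∧ po p q u v w < po p q u v y) := by
  intro h1
  by_contra h2
  have n1 : w ≠ x := by rintro rfl; exact hn hzw
  have n2 : w ≠ y := by rintro rfl; exact hn (hzw.trans hxy.symm)
  have := po_ne hu hv n1
  have := po_ne hu hv n2
  refine good_nc hu hv h (a := x) (b := z) (c := y) (d := w) ?_ ?_ hxy hzw (fun e => hn e.symm)
  · unfold cyc; omega
  · unfold cyc; omega

theorem same_side_iff {σ : Perm (Fin (p + q))} {u v : Fin (p + q)} (hu : (u : ℕ) < p)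
    (hv : p ≤ (v : ℕ)) (h : Good σ (gammaAnn p q * swap u v)) {x y z w : Fin (p + q)}
    (hx : (x : ℕ) < p) (hy : p ≤ (y : ℕ)) (hzw : σ.SameCycle z w) (hxy : σ.SameCycle x y)
    (hn : ¬ σ.SameCycle z x) : 
    (po p q u v x < po p q u v z ∧ po p q u v z < po p q u v y) ↔
      (po p q u v x < po p q u v w ∧ po p q u v w < po p q u v y) :=
  ⟨same_side hu hv h hx hy hzw hxy hn,
    same_side hu hv h hx hy hzw.symm hxy (fun e => hn (hzw.trans e))⟩

theorem lam_lt_fin {u v x y z w : Fin (p + q)} (hu : (u : ℕ) < p) (hv : p ≤ (v : ℕ))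
    (hx : (x : ℕ) < p) (hy : p ≤ (y : ℕ)) 
    (hzx : z ≠ x) (hzy : z ≠ y) (hwx : w ≠ x) (hwy : w ≠ y)
    (h : (po p q u v x < po p q u v z ∧ po p q u v z < po p q u v y) ↔
      (po p q u v x < po p q u v w ∧ po p q u v w < po p q u v y)) :
    pl p q x y z < pl p q x y w ↔ po p q u v z < po p q u v w := 
  lam_lt hu hv v.2 hx hy y.2 z.2 w.2 (fun e => hzx (Fin.ext e)) (fun e => hzy (Fin.ext e))
    (fun e => hwx (Fin.ext e)) (fun e => hwy (Fin.ext e)) h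

theorem lam_opp_fin {u v x y z w : Fin (p + q)} (hu : (u : ℕ) < p) (hv : p ≤ (v : ℕ))
    (hx : (x : ℕ) < p) (hy : p ≤ (y : ℕ)) 
    (hzx : z ≠ x) (hzy : z ≠ y) (hwx : w ≠ x) (hwy : w ≠ y)
    (h : po p q u v x < po p q u v z ∧ po p q u v z < po p q u v y) 
    (h' : ¬ (po p q u v x < po p q u v w ∧ po p q u v w < po p q u v y)) :
    pl p q x y z < pl p q x y w ↔ (z : ℕ) < p := 
  lam_opp hu hv v.2 hx hy y.2 z.2 w.2 (fun e => hzx (Fin.ext e)) (fun e => hzy (Fin.ext e))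
    (fun e => hwx (Fin.ext e)) (fun e => hwy (Fin.ext e)) h h'

theorem no_ac2_of_good {σ : Perm (Fin (p + q))} {u v : Fin (p + q)} (hu : (u : ℕ) < p)
    (hv : p ≤ (v : ℕ)) (h : Good σ (gammaAnn p q * swap u v)) : ¬ AC2 p q σ := by
  rintro ⟨a, b, c, x, y, hn, hx, hy, hl, hσ, hxy⟩
  change (x : ℕ) < p at hx
  change p ≤ (y : ℕ) at hy
  have hn' := hn
  simp at hn'
  obtain ⟨⟨ab, ac, ax, ay⟩, ⟨bc, bx, By⟩, ⟨cx, cy⟩, xy⟩ := hn'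
  have ra := (induced_iff σ (by simp)).1 hσ.1
  have rc := (induced_iff σ (by simp)).1 hσ.2.1
  have rb := (induced_iff σ (by simp)).1 hσ.2.2
  have rx := (induced_iff σ (by simp)).1 hxy.1
  have sac := ra.sameCycle
  have sab := sac.trans rc.sameCycle
  have sxy := rx.sameCycle
  have nax : ¬ σ.SameCycle a x := by
    intro e
    have := ret_closed σ (B := {a, b, c, x, y}) (P := {a, b, c}) (by
      rintro z (rfl | rfl | rfl)
      · exact ⟨_, by simp, ra⟩
      · exact ⟨_, by simp, rb⟩
      · exact ⟨_, by simp, rc⟩) (z := a) (by simp) e (by simp)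
    rcases this with e | e | e <;> simp_all
  have iab := same_side_iff hu hv h hx hy sab sxy nax
  have iac := same_side_iff hu hv h hx hy sac sxy nax
  have lc : cyc (pl p q x y a) (pl p q x y b) (pl p q x y c) :=
    (isCyc_lam x y hx hy).of_cyc3 (by simp [ax, ay]) (by simp [bx, By]) (by simp [cx, cy])
      (Ne.symm ac) (Ne.symm bc) hl
  have l1 := lam_lt_fin hu hv hx hy ax ay bx By iab
  have l2 := lam_lt_fin hu hv hx hy bx By cx cy (iab.symm.trans iac)
  have l3 := lam_lt_fin hu hv hx hy cx cy ax ay iac.symm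
  unfold cyc at lc
  rw [l1, l2, l3] at lc
  have k := good_std hu hv h (by simp) ra (c := b) (by simp) sab (Ne.symm ab) bc
  unfold cyc at k
  omega

theorem no_ac3_of_good {σ : Perm (Fin (p + q))} {u v : Fin (p + q)} (hu : (u : ℕ) < p)
    (hv : p ≤ (v : ℕ)) (h : Good σ (gammaAnn p q * swap u v)) : ¬ AC3 p q σ := by
  rintro ⟨a, b, c, d, x, y, hn, hx, hy, hl, hσ, hxy⟩
  change (x : ℕ) < p at hx
  change p ≤ (y : ℕ) at hy
  have hn' := hn
  simp at hn'
  obtain ⟨⟨ab, ac, ad, ax, ay⟩, ⟨bc, bd, bx, By⟩, ⟨cd, cx, cy⟩, ⟨dx, dy⟩, xy⟩ := hn'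
  have ra := (induced_iff σ (by simp)).1 hσ.1
  have rc := (induced_iff σ (by simp)).1 hσ.2.1
  have rb := (induced_iff σ (by simp)).1 hσ.2.2.1
  have rd := (induced_iff σ (by simp)).1 hσ.2.2.2
  have rx := (induced_iff σ (by simp)).1 hxy.1
  have sac := ra.sameCycle
  have sbd := rb.sameCycle
  have sxy := rx.sameCycle
  have na : ∀ z ∈ ({a, b, c, d, x, y} : Set _), σ.SameCycle a z → z = a ∨ z = c := by
    intro z hz e
    exact ret_closed σ (B := {a, b, c, d, x, y}) (P := {a, c}) (by
      rintro z (rfl | rfl)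
      · exact ⟨_, by simp, ra⟩
      · exact ⟨_, by simp, rc⟩) (z := a) (by simp) e hz
  have nb : ∀ z ∈ ({a, b, c, d, x, y} : Set _), σ.SameCycle b z → z = b ∨ z = d := by
    intro z hz e
    exact ret_closed σ (B := {a, b, c, d, x, y}) (P := {b, d}) (by
      rintro z (rfl | rfl)
      · exact ⟨_, by simp, rb⟩
      · exact ⟨_, by simp, rd⟩) (z := b) (by simp) e hz
  have nax : ¬ σ.SameCycle a x := fun e => by
    rcases na x (by simp) e with e | e
    · exact ax e.symm
    · exact cx e.symm
  have nab : ¬ σ.SameCycle a b := fun e => by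
    rcases na b (by simp) e with e | e
    · exact ab e.symm
    · exact bc e
  have nbx : ¬ σ.SameCycle b x := fun e => by
    rcases nb x (by simp) e with e | e
    · exact bx e.symm
    · exact dx e.symm
  have iac := same_side_iff hu hv h hx hy sac sxy nax
  have ibd := same_side_iff hu hv h hx hy sbd sxy nbx
  have lc : cyc (pl p q x y a) (pl p q x y b) (pl p q x y c) ∧
      cyc (pl p q x y a) (pl p q x y c) (pl p q x y d) :=
    (isCyc_lam x y hx hy).of_cyc4 (by simp [ax, ay]) (by simp [bx, By]) (by simp [cx, cy])
      (by simp [dx, dy]) (by simp [*]) hl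
  by_cases ia : (po p q u v x < po p q u v a ∧ po p q u v a < po p q u v y) 
  · by_cases ib : (po p q u v x < po p q u v b ∧ po p q u v b < po p q u v y) 
    · have iab : _ ↔ _ := iff_of_true ia ib
      have l1 := lam_lt_fin hu hv hx hy ax ay bx By iab
      have l2 := lam_lt_fin hu hv hx hy bx By cx cy (iab.symm.trans iac)
      have l3 := lam_lt_fin hu hv hx hy cx cy ax ay iac.symm
      have l4 := lam_lt_fin hu hv hx hy cx cy dx dy (iac.symm.trans (iab.trans ibd))
      have l5 := lam_lt_fin hu hv hx hy dx dy ax ay (iab.trans ibd).symm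
      have l6 := lam_lt_fin hu hv hx hy ax ay cx cy iac
      unfold cyc at lc
      rw [l1, l2, l3, l4, l5, l6] at lc
      exact good_nc hu hv h lc.1 lc.2 sac sbd nab
    · have ic := iac.1 ia
      have id := fun e => ib (ibd.2 e)
      have l1 := lam_opp_fin hu hv hx hy ax ay bx By ia ib
      have l2 := lam_opp_fin hu hv hx hy ax ay dx dy ia id
      have l3 := lam_opp_fin hu hv hx hy cx cy bx By ic ib
      have l4 := lam_opp_fin hu hv hx hy cx cy dx dy ic id
      unfold cyc at lc
      omega
  · have ic := fun e => ia (iac.2 e)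
    by_cases ib : (po p q u v x < po p q u v b ∧ po p q u v b < po p q u v y) 
    · have id := ibd.1 ib
      have l1 := lam_opp_fin hu hv hx hy bx By ax ay ib ia
      have l2 := lam_opp_fin hu hv hx hy bx By cx cy ib ic
      have l3 := lam_opp_fin hu hv hx hy dx dy ax ay id ia
      have l4 := lam_opp_fin hu hv hx hy dx dy cx cy id ic
      unfold cyc at lc
      omega
    · have iab : _ ↔ _ := iff_of_false ia ib
      have l1 := lam_lt_fin hu hv hx hy ax ay bx By iab
      have l2 := lam_lt_fin hu hv hx hy bx By cx cy (iab.symm.trans iac)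
      have l3 := lam_lt_fin hu hv hx hy cx cy ax ay iac.symm
      have l4 := lam_lt_fin hu hv hx hy cx cy dx dy (iac.symm.trans (iab.trans ibd))
      have l5 := lam_lt_fin hu hv hx hy dx dy ax ay (iab.trans ibd).symm
      have l6 := lam_lt_fin hu hv hx hy ax ay cx cy iac
      unfold cyc at lc
      rw [l1, l2, l3, l4, l5, l6] at lc
      exact good_nc hu hv h lc.1 lc.2 sac sbd nab

theorem annNC_of_good {σ : Perm (Fin (p + q))} {u v : Fin (p + q)} (hu : (u : ℕ) < p)
    (hv : p ≤ (v : ℕ)) (h : Good σ (gammaAnn p q * swap u v)) : AnnNC p q σ :=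
  ⟨annStandard_of_good hu hv h, no_ac1_of_good hu hv h, no_ac2_of_good hu hv h,
    no_ac3_of_good hu hv h⟩

end PartTwo

section PartOne

variable {p q : ℕ}

/-- Standardness and the absence of crossings in the linear order of positions give `Good`. -/
theorem part1_good {τ : Perm (Fin (p + q))} {u v : Fin (p + q)} (hu : (u : ℕ) < p)
    (hv : p ≤ (v : ℕ))
    (hstd : ∀ a c, τ.SameCycle a c → c ≠ a → c ≠ τ a →
      cyc (po p q u v a) (po p q u v (τ a)) (po p q u v c))
    (hnc : ∀ a b c d : Fin (p + q), po p q u v a < po p q u v b → po p q u v b < po p q u v c →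
      po p q u v c < po p q u v d → τ.SameCycle a c → τ.SameCycle b d → τ.SameCycle a b) :
    Good τ (gammaAnn p q * swap u v) := by
  have hf := isCyc_full u v hu hv
  have hk : ∀ a b, {z | τ.SameCycle a z} = {z | τ.SameCycle b z} ↔ τ.SameCycle a b := by
    intro a b
    constructor
    · intro h
      have : b ∈ {z | τ.SameCycle b z} := Perm.SameCycle.refl τ b
      rw [← h] at this
      exact this
    · intro h
      ext z
      exact ⟨fun k => h.symm.trans k, fun k => h.trans k⟩
  apply good_of_nc (fun z : Fin (p + q) => po p q u v z) (fun a => {z | τ.SameCycle a z}) (p + q)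
    Finset.univ τ _ (by simp)
  · intro a _ b _ h
    exact hf.inj (by simp) (by simp) h
  · simp
  · simp
  · intro a _ c _ h1 h2
    exact hf.ret (B := Set.univ) (by simp) (by simp) (Ret.base a (by simp)) (by simp) h1 h2
  · intro a _
    rw [hk]
    exact Perm.sameCycle_apply_left.2 (Perm.SameCycle.refl τ a)
  · intro a _ c _ h h1 h2
    rw [hk] at h
    exact hstd a c h.symm h1 h2
  · intro a _ b _ c _ d _ h1 h2 h3 h4 h5
    rw [hk] at h4 h5 ⊢
    exact hnc a b c d h1 h2 h3 h4 h5

theorem mkAC1 {τ : Perm (Fin (p + q))} {u v : Fin (p + q)} (hu : (u : ℕ) < p)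
    (hv : p ≤ (v : ℕ)) {a b c d : Fin (p + q)}
    (hside : ((a : ℕ) < p ∧ (b : ℕ) < p ∧ (c : ℕ) < p ∧ (d : ℕ) < p) ∨
      (p ≤ (a : ℕ) ∧ p ≤ (b : ℕ) ∧ p ≤ (c : ℕ) ∧ p ≤ (d : ℕ)))
    (h1 : cyc (po p q u v a) (po p q u v b) (po p q u v c))
    (h2 : cyc (po p q u v a) (po p q u v c) (po p q u v d))
    (hac : τ.SameCycle a c) (hbd : τ.SameCycle b d) (hab : ¬ τ.SameCycle a b) : AC1 p q τ := by
  have n1 : a ≠ c := by rintro rfl; unfold cyc at h1; omega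
  have n2 : b ≠ d := by rintro rfl; unfold cyc at h1 h2; omega
  have n3 : a ≠ b := by rintro rfl; unfold cyc at h1; omega
  have n4 : a ≠ d := by rintro rfl; unfold cyc at h2; omega
  have n5 : b ≠ c := by rintro rfl; unfold cyc at h1; omega
  have n6 : c ≠ d := by rintro rfl; unfold cyc at h2; omega
  refine ⟨a, b, c, d, by simp [n1, n2, n3, n4, n5, n6], ?_, ?_⟩
  · rcases hside with ⟨ha, hb, hc, hd⟩ | ⟨ha, hb, hc, hd⟩
    · exact (isCyc_ext _ gammaAnn_ext u v hu hv).cyc4 ha hb hc hd h1 h2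
    · have := po_int (q := q) (u := u) (v := v) ha
      have := po_int (q := q) (u := u) (v := v) hb
      have := po_int (q := q) (u := u) (v := v) hc
      have := po_int (q := q) (u := u) (v := v) hd
      refine (isCyc_int _ gammaAnn_int u v hu hv).cyc4 ha hb hc hd ?_ ?_
      · unfold cyc at *
        omega
      · unfold cyc at *
        omega
  · apply mapsSwap2_of τ n1 n2 (by simp) (by simp) (by simp) (by simp) ?_ ?_ hac hbd
    · rintro z (rfl | rfl | rfl | rfl) hz
      · simp
      · exact absurd hz hab
      · simp
      · exact absurd (hz.trans hbd.symm) hab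
    · rintro z (rfl | rfl | rfl | rfl) hz
      · exact absurd hz.symm hab
      · simp
      · exact absurd (hac.trans hz.symm) hab
      · simp

theorem mkAC2 {τ : Perm (Fin (p + q))} {a b c x y : Fin (p + q)} (hx : (x : ℕ) < p)
    (hy : p ≤ (y : ℕ)) (hxy : τ.SameCycle x y)
    (h1 : cyc (pl p q x y a) (pl p q x y b) (pl p q x y c))
    (hab : τ.SameCycle a b) (hac : c = τ a) (hax : ¬ τ.SameCycle a x) : AC2 p q τ := by
  have hac' : τ.SameCycle a c := by
    rw [hac]; exact Perm.sameCycle_apply_right.2 (Perm.SameCycle.refl τ a)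
  have n1 : a ≠ c := by rintro h; rw [← h] at h1; unfold cyc at h1; omega
  have n3 : a ≠ b := by rintro rfl; unfold cyc at h1; omega
  have n5 : b ≠ c := by rintro rfl; unfold cyc at h1; omega
  have e1 : ∀ z, τ.SameCycle a z → z ≠ x := by rintro z hz rfl; exact hax hz
  have e2 : ∀ z, τ.SameCycle a z → z ≠ y := by rintro z hz rfl; exact hax (hz.trans hxy.symm)
  have n6 : x ≠ y := by rintro rfl; omega
  have ra := Perm.SameCycle.refl τ a
  refine ⟨a, b, c, x, y, ?_, hx, hy, ?_, ?_, ?_⟩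
  · simp [n1, n3, n5, n6, e1 a ra, e1 b hab, e1 c hac', e2 a ra, e2 b hab, e2 c hac']
  · refine (isCyc_lam x y hx hy).cyc3 ?_ ?_ ?_ h1
    · simp [e1 a ra, e2 a ra]
    · simp [e1 b hab, e2 b hab]
    · simp [e1 c hac', e2 c hac']
  · apply mapsCyc3_of τ n1 n3 n5.symm (by simp) (by simp) (by simp) ?_ hac' hab
    · rw [hac]
      exact Ret.base a (by simp)
    · rintro z (rfl | rfl | rfl | rfl | rfl) hz
      · simp
      · simp
      · simp
      · exact absurd rfl (e1 _ hz)
      · exact absurd rfl (e2 _ hz)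
  · apply mapsSwap_of τ n6 (by simp) (by simp) ?_ hxy
    rintro z (rfl | rfl | rfl | rfl | rfl) hz
    · exact absurd hz.symm hax
    · exact absurd (hab.trans hz.symm) hax
    · exact absurd (hac'.trans hz.symm) hax
    · simp
    · simp

theorem mkAC3 {τ : Perm (Fin (p + q))} {a b c d x y : Fin (p + q)} (hx : (x : ℕ) < p)
    (hy : p ≤ (y : ℕ)) (hxy : τ.SameCycle x y)
    (h1 : cyc (pl p q x y a) (pl p q x y b) (pl p q x y c))
    (h2 : cyc (pl p q x y a) (pl p q x y c) (pl p q x y d))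
    (hac : τ.SameCycle a c) (hbd : τ.SameCycle b d) (hab : ¬ τ.SameCycle a b)
    (hax : ¬ τ.SameCycle a x) (hbx : ¬ τ.SameCycle b x) : AC3 p q τ := by
  have n1 : a ≠ c := by rintro rfl; unfold cyc at h1; omega
  have n2 : b ≠ d := by rintro rfl; unfold cyc at h1 h2; omega
  have n3 : a ≠ b := by rintro rfl; unfold cyc at h1; omega
  have n4 : a ≠ d := by rintro rfl; unfold cyc at h2; omega
  have n5 : b ≠ c := by rintro rfl; unfold cyc at h1; omega
  have n6 : c ≠ d := by rintro rfl; unfold cyc at h2; omega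
  have e1 : ∀ z, τ.SameCycle a z → z ≠ x := by rintro z hz rfl; exact hax hz
  have e2 : ∀ z, τ.SameCycle a z → z ≠ y := by rintro z hz rfl; exact hax (hz.trans hxy.symm)
  have f1 : ∀ z, τ.SameCycle b z → z ≠ x := by rintro z hz rfl; exact hbx hz
  have f2 : ∀ z, τ.SameCycle b z → z ≠ y := by rintro z hz rfl; exact hbx (hz.trans hxy.symm)
  have n7 : x ≠ y := by rintro rfl; omega
  have ra := Perm.SameCycle.refl τ a
  have rb := Perm.SameCycle.refl τ b
  refine ⟨a, b, c, d, x, y, ?_, hx, hy, ?_, ?_, ?_⟩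
  · simp [n1, n2, n3, n4, n5, n6, n7, e1 a ra, e1 c hac, e2 a ra, e2 c hac, f1 b rb, f1 d hbd,
      f2 b rb, f2 d hbd]
  · refine (isCyc_lam x y hx hy).cyc4 ?_ ?_ ?_ ?_ h1 h2
    · simp [e1 a ra, e2 a ra]
    · simp [f1 b rb, f2 b rb]
    · simp [e1 c hac, e2 c hac]
    · simp [f1 d hbd, f2 d hbd]
  · apply mapsSwap2_of τ n1 n2 (by simp) (by simp) (by simp) (by simp) ?_ ?_ hac hbd
    · rintro z (rfl | rfl | rfl | rfl | rfl | rfl) hz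
      · simp
      · exact absurd hz hab
      · simp
      · exact absurd (hz.trans hbd.symm) hab
      · exact absurd rfl (e1 _ hz)
      · exact absurd rfl (e2 _ hz)
    · rintro z (rfl | rfl | rfl | rfl | rfl | rfl) hz
      · exact absurd hz.symm hab
      · simp
      · exact absurd (hac.trans hz.symm) hab
      · simp
      · exact absurd rfl (f1 _ hz)
      · exact absurd rfl (f2 _ hz)
  · apply mapsSwap_of τ n7 (by simp) (by simp) ?_ hxy
    rintro z (rfl | rfl | rfl | rfl | rfl | rfl) hz
    · exact absurd hz.symm hax
    · exact absurd hz.symm hbx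
    · exact absurd (hac.trans hz.symm) hax
    · exact absurd (hbd.trans hz.symm) hbx
    · simp
    · simp

/-- One-sided standardness, external side. -/
theorem side_ext {τ : Perm (Fin (p + q))} (h : AnnStandard p q τ) {u v : Fin (p + q)}
    (hu : (u : ℕ) < p) (hv : p ≤ (v : ℕ)) {a w d : Fin (p + q)} (ha : (a : ℕ) < p)
    (hd : (d : ℕ) < p) (had : τ.SameCycle a d)
    (hr : Ret τ ({z | τ.SameCycle a z} ∩ extSet p q) a w) (hda : d ≠ a) (hdw : d ≠ w) :
    cyc (po p q u v a) (po p q u v w) (po p q u v d) := by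
  have hm : a ∈ {z | τ.SameCycle a z} ∩ extSet p q := ⟨Perm.SameCycle.refl τ a, ha⟩
  have := (h.1 _ ⟨a, rfl⟩).1 a hm
  rw [(induced_iff τ hm).2 hr] at this
  have := (induced_iff _ hm).1 this.symm
  exact (isCyc_ext _ (fun _ _ => rfl) u v hu hv).ret Set.inter_subset_right ⟨had, hd⟩ this ha hda hdw

/-- One-sided standardness, internal side. -/
theorem side_int {τ : Perm (Fin (p + q))} (h : AnnStandard p q τ) {u v : Fin (p + q)}
    (hu : (u : ℕ) < p) (hv : p ≤ (v : ℕ)) {a w d : Fin (p + q)} (ha : p ≤ (a : ℕ))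
    (hd : p ≤ (d : ℕ)) (had : τ.SameCycle a d)
    (hr : Ret τ ({z | τ.SameCycle a z} ∩ intSet p q) a w) (hda : d ≠ a) (hdw : d ≠ w) :
    cyc (po p q u v a) (po p q u v w) (po p q u v d) := by
  have hm : a ∈ {z | τ.SameCycle a z} ∩ intSet p q := ⟨Perm.SameCycle.refl τ a, ha⟩
  have hw : p ≤ (w : ℕ) := hr.mem.2
  have := (h.1 _ ⟨a, rfl⟩).2 a hm
  rw [(induced_iff τ hm).2 hr] at this
  have := (induced_iff _ hm).1 this.symm
  have := (isCyc_int _ (fun _ _ => rfl) u v hu hv).ret Set.inter_subset_right ⟨had, hd⟩ this ha hda hdw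
  have := po_int (q := q) (u := u) (v := v) ha
  have := po_int (q := q) (u := u) (v := v) hw
  have := po_int (q := q) (u := u) (v := v) hd
  unfold cyc at *
  omega

theorem side_ext_one {τ : Perm (Fin (p + q))} (h : AnnStandard p q τ) {u v : Fin (p + q)}
    (hu : (u : ℕ) < p) (hv : p ≤ (v : ℕ)) {a d : Fin (p + q)} (ha : (a : ℕ) < p)
    (ha' : (τ a : ℕ) < p) (hd : (d : ℕ) < p) (had : τ.SameCycle a d) (hda : d ≠ a)
    (hdw : d ≠ τ a) : cyc (po p q u v a) (po p q u v (τ a)) (po p q u v d) :=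
  side_ext h hu hv ha hd had
    (Ret.base a ⟨Perm.sameCycle_apply_right.2 (Perm.SameCycle.refl τ a), ha'⟩) hda hdw

theorem side_int_one {τ : Perm (Fin (p + q))} (h : AnnStandard p q τ) {u v : Fin (p + q)}
    (hu : (u : ℕ) < p) (hv : p ≤ (v : ℕ)) {a d : Fin (p + q)} (ha : p ≤ (a : ℕ))
    (ha' : p ≤ (τ a : ℕ)) (hd : p ≤ (d : ℕ)) (had : τ.SameCycle a d) (hda : d ≠ a)
    (hdw : d ≠ τ a) : cyc (po p q u v a) (po p q u v (τ a)) (po p q u v d) :=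
  side_int h hu hv ha hd had
    (Ret.base a ⟨Perm.sameCycle_apply_right.2 (Perm.SameCycle.refl τ a), ha'⟩) hda hdw

theorem po_side {u v z w : Fin (p + q)} (hu : (u : ℕ) < p)
    (h : po p q u v z ≤ po p q u v w) (hz : p ≤ (z : ℕ)) : p ≤ (w : ℕ) := by
  by_contra hw
  have := po_int (q := q) (u := u) (v := v) hz
  have := po_ext (q := q) (v := v) (z := w) hu (by omega)
  omega

theorem part1_disc {τ : Perm (Fin (p + q))} (hp : 0 < p) (hq : 0 < q) (h : AnnNC p q τ)
    (hs : ∀ z, (τ z : ℕ) < p ↔ (z : ℕ) < p) :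
    ∃ u v : Fin (p + q), (u : ℕ) < p ∧ p ≤ (v : ℕ) ∧ Good τ (gammaAnn p q * swap u v) := by
  obtain ⟨hst, h1, h2, h3⟩ := h
  refine ⟨⟨0, by omega⟩, ⟨p, by omega⟩, hp, le_rfl, ?_⟩
  generalize hu' : (⟨0, by omega⟩ : Fin (p + q)) = u
  generalize hv' : (⟨p, by omega⟩ : Fin (p + q)) = v
  have hu : (u : ℕ) < p := by rw [← hu']; exact hp
  have hv : p ≤ (v : ℕ) := by rw [← hv']
  clear hu' hv'
  apply part1_good hu hv
  · intro a c hac hca hc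
    have k := side_of_sameCycle hs hac
    have k2 := hs a
    by_cases ha : (a : ℕ) < p
    · exact side_ext_one hst hu hv ha (k2.2 ha) (k.1 ha) hac hca hc
    · exact side_int_one hst hu hv (by omega) (by omega) (by omega) hac hca hc
  · intro a b c d hab hbc hcd hac hbd
    by_contra hn
    refine h1 (mkAC1 hu hv (a := a) (b := b) (c := c) (d := d) ?_ ?_ ?_ hac hbd hn)
    · have k := side_of_sameCycle hs hac
      have k2 := side_of_sameCycle hs hbd
      have l1 := po_side (z := a) (w := b) hu hab.le
      have l2 := po_side (z := b) (w := c) hu hbc.le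
      clear hab hbc hcd
      omega
    · unfold cyc; omega
    · unfold cyc; omega

end PartOne

section PartOneConn

variable {p q : ℕ}

theorem po_self {u v : Fin (p + q)} (hu : (u : ℕ) < p) : po p q u v u = p - 1 := by
  unfold po
  rw [if_pos hu, if_neg (by omega)]
  omega

theorem po_next {u v : Fin (p + q)} (hu : (u : ℕ) < p) (hv : p ≤ (v : ℕ)) :
    po p q u v (gammaAnn p q v) = p := by
  have hf := (isCyc_full u v hu hv).step u (by simp)
  have e := po_self (v := v) hu
  have := v.2
  simp only [Perm.mul_apply, swap_apply_left] at hf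
  rw [hf, e, if_pos (by omega)]
  omega

theorem cyc_of_not {a b c : ℕ} (h : ¬ cyc a b c) (h1 : a ≠ b) (h2 : a ≠ c) (h3 : b ≠ c) :
    cyc a c b := by
  unfold cyc at *
  omega

/-- From an internal point of the orbit, the first external point is reached through the unique
internal exit. -/
theorem ret_exit {τ : Perm (Fin (p + q))} {a e : Fin (p + q)} {S : Set (Fin (p + q))}
    (hu : ∀ z, τ.SameCycle e z → z ∉ S → τ z ∈ S → z = a) {b w : Fin (p + q)}
    (hr : Ret τ ({z | τ.SameCycle e z} ∩ S) b w) (hb : b ∉ S) (hbe : τ.SameCycle e b) :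
    w = τ a := by
  induction hr with
  | base b h => rw [hu b hbe hb h.2]
  | step b c h _ ih =>
    have hs : τ.SameCycle e (τ b) := Perm.sameCycle_apply_right.2 hbe
    exact ih (fun k => h ⟨hs, k⟩) hs

theorem ret_step_of {τ : Perm (Fin (p + q))} {a e b : Fin (p + q)} {S : Set (Fin (p + q))}
    (hu : ∀ z, τ.SameCycle e z → z ∉ S → τ z ∈ S → z = a) (hb : b ∈ S)
    (hbe : τ.SameCycle e b) (hb' : τ b ∉ S) :
    Ret τ ({z | τ.SameCycle e z} ∩ S) b (τ a) := by
  have hm : b ∈ {z | τ.SameCycle e z} ∩ S := ⟨hbe, hb⟩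
  obtain ⟨w, hw⟩ := exists_ret τ hm
  have hw' := hw
  cases hw with
  | base _ h => exact absurd h.2 hb'
  | step _ _ h h2 =>
    rw [ret_exit hu h2 hb' (Perm.sameCycle_apply_right.2 hbe)] at hw'
    exact hw'

theorem orbit_eq {τ : Perm (Fin (p + q))} {a b : Fin (p + q)} (h : τ.SameCycle a b) :
    {z | τ.SameCycle a z} = {z | τ.SameCycle b z} := by
  ext z
  exact ⟨fun k => h.symm.trans k, fun k => h.trans k⟩

theorem lam_conn {u v y z w : Fin (p + q)} (hu : (u : ℕ) < p)
    (hv : p ≤ (v : ℕ)) (hy : gammaAnn p q v = y) (hy' : p ≤ (y : ℕ)) (hz : z ≠ u) (hz' : z ≠ y)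
    (hw : w ≠ u) (hw' : w ≠ y) :
    pl p q u y z < pl p q u y w ↔ po p q u v z < po p q u v w := by
  apply lam_lt_fin hu hv hu hy' hz hz' hw hw'
  have e1 := po_self (v := v) hu
  have e2 := po_next hu hv
  rw [hy] at e2
  constructor <;> · intro h; omega

theorem conn_std {τ : Perm (Fin (p + q))} (h : AnnNC p q τ) {u v : Fin (p + q)}
    (hu : (u : ℕ) < p) (hv : p ≤ (v : ℕ)) (hy : gammaAnn p q v = τ u) (hy' : p ≤ (τ u : ℕ))
    (a c : Fin (p + q)) (hac : τ.SameCycle a c) (hca : c ≠ a) (hc : c ≠ τ a) :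
    cyc (po p q u v a) (po p q u v (τ a)) (po p q u v c) := by
  obtain ⟨hst, h1, h2, h3⟩ := h
  have e1 := po_self (v := v) hu
  have e2 := po_next hu hv
  rw [hy] at e2
  have huy : τ.SameCycle u (τ u) := Perm.sameCycle_apply_right.2 (Perm.SameCycle.refl τ u)
  have haa : τ.SameCycle a (τ a) := Perm.sameCycle_apply_right.2 (Perm.SameCycle.refl τ a)
  have hta : τ a ≠ a := by
    intro e
    exact ret_ne τ (B := Set.univ) (by simp) hca hac (Ret.base a (by simp)) e
  have n1 := po_ne hu hv hca
  have n2 := po_ne hu hv hc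
  have n3 := po_ne hu hv hta
  by_cases hau : τ.SameCycle a u
  · obtain ⟨⟨u1, hu1, hu2⟩, ⟨w1, hw1, hw2⟩⟩ := hst.2 _ ⟨u, rfl⟩ ⟨u, Perm.SameCycle.refl τ u, hu⟩
      ⟨τ u, huy, hy'⟩
    have U1 : ∀ z, τ.SameCycle u z → (z : ℕ) < p → p ≤ (τ z : ℕ) → z = u := fun z i j k =>
      (hu2 z ⟨⟨i, j⟩, k⟩).trans (hu2 u ⟨⟨Perm.SameCycle.refl τ u, hu⟩, hy'⟩).symm
    have mx : ∀ z : Fin (p + q), (z : ℕ) < p → po p q u v z ≤ p - 1 := fun z hz => by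
      have := po_ext (q := q) (v := v) hu hz
      omega
    have mi : ∀ z : Fin (p + q), p ≤ (z : ℕ) → p ≤ po p q u v z := fun z hz => po_int hz
    rcases lt_or_ge (a : ℕ) p with ha | ha
    · rcases lt_or_ge (τ a : ℕ) p with hta' | hta'
      · rcases lt_or_ge (c : ℕ) p with hcp | hcp
        · exact side_ext_one hst hu hv ha hta' hcp hac hca hc
        · have : a ≠ u := by rintro rfl; omega
          have k1 := mx a ha
          have k2 := mx _ hta'
          have k3 := mi c hcp
          have k4 := po_ne hu hv this
          by_cases e : τ a = u
          · rw [e] at n3 ⊢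
            unfold cyc
            omega
          · have k := side_ext_one hst hu hv ha hta' hu hau (Ne.symm this) (Ne.symm e)
            unfold cyc at *
            omega
      · have := U1 a hau.symm ha hta'
        subst this
        unfold cyc
        omega
    · rcases lt_or_ge (τ a : ℕ) p with hta' | hta'
      · have W : ∀ z, τ.SameCycle u z → z ∉ extSet p q → τ z ∈ extSet p q → z = a :=
          fun z i j k => by
            have j' : z ∈ intSet p q := by rw [← compl_ext]; exact j
            exact (hw2 z ⟨⟨i, j'⟩, k⟩).trans (hw2 a ⟨⟨hau.symm, ha⟩, hta'⟩).symm
        have r1 := ret_step_of (b := u) W hu (Perm.SameCycle.refl τ u)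
          (by rw [← Set.mem_compl_iff, compl_ext]; exact hy')
        have U : ∀ z, τ.SameCycle u z → z ∉ intSet p q → τ z ∈ intSet p q → z = u :=
          fun z i j k => by
            have j' : z ∈ extSet p q := by rw [← compl_int]; exact j
            exact U1 z i j' k
        have r2 := ret_step_of (b := a) U ha hau.symm
          (by rw [← Set.mem_compl_iff, compl_int]; exact hta')
        rw [orbit_eq hau.symm] at r2
        have k1 := mx _ hta'
        have k2 := mi _ ha
        rcases lt_or_ge (c : ℕ) p with hcp | hcp
        · have k3 := mx _ hcp
          by_cases e : c = u
          · subst e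
            unfold cyc
            omega
          · have k := side_ext hst hu hv hu hcp (hau.symm.trans hac) r1 e hc
            unfold cyc at *
            omega
        · have k3 := mi _ hcp
          by_cases e : c = τ u
          · rw [e] at n1 n2 ⊢
            unfold cyc
            omega
          · have k := side_int hst hu hv ha hcp hac r2 hca e
            unfold cyc at *
            omega
      · rcases lt_or_ge (c : ℕ) p with hcp | hcp
        · have : τ a ≠ τ u := by
            intro e
            have := τ.injective e
            subst this
            omega
          have k1 := mi a ha
          have k2 := mi _ hta'
          have k3 := mx c hcp
          have k4 := po_ne hu hv this
          by_cases e : a = τ u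
          · rw [← e] at e2
            unfold cyc
            omega
          · have k := side_int_one hst hu hv ha hta' hy' (hau.trans huy) (Ne.symm e) (Ne.symm this)
            unfold cyc at *
            omega
        · exact side_int_one hst hu hv ha hta' hcp hac hca hc
  · by_contra hn
    have hn' := cyc_of_not hn n3.symm n1.symm n2.symm
    have f1 : ∀ z, τ.SameCycle a z → z ≠ u := by rintro z hz rfl; exact hau hz
    have f2 : ∀ z, τ.SameCycle a z → z ≠ τ u := by
      rintro z hz rfl; exact hau (hz.trans huy.symm)
    have ra := Perm.SameCycle.refl τ a
    refine h2 (mkAC2 hu hy' huy (a := a) (b := c) (c := τ a) ?_ hac rfl hau)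
    have L : ∀ z w, τ.SameCycle a z → τ.SameCycle a w →
        (pl p q u (τ u) z < pl p q u (τ u) w ↔ po p q u v z < po p q u v w) :=
      fun z w hz hw => lam_conn hu hv hy hy' (f1 z hz) (f2 z hz) (f1 w hw) (f2 w hw)
    unfold cyc at *
    rw [L _ _ ra hac, L _ _ hac haa, L _ _ haa ra]
    exact hn'

/-- The key exclusion: an orbit separating two points of the orbit of `u`. -/
theorem conn_sep {τ : Perm (Fin (p + q))} (h : AnnNC p q τ) {u v : Fin (p + q)}
    (hu : (u : ℕ) < p) (hv : p ≤ (v : ℕ)) (hy : gammaAnn p q v = τ u) (hy' : p ≤ (τ u : ℕ))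
    {b z c w : Fin (p + q)} (hbz : po p q u v b < po p q u v z) (hzc : po p q u v z < po p q u v c)
    (hw : po p q u v w < po p q u v b ∨ po p q u v c < po p q u v w)
    (hbc : τ.SameCycle b c) (hbu : ¬ τ.SameCycle b u) (hz : τ.SameCycle u z)
    (hwu : τ.SameCycle u w) : False := by
  have hstd := conn_std h hu hv hy hy'
  obtain ⟨hst, h1, h2, h3⟩ := h
  have e1 := po_self (v := v) hu
  have e2 := po_next hu hv
  rw [hy] at e2
  have huy : τ.SameCycle u (τ u) := Perm.sameCycle_apply_right.2 (Perm.SameCycle.refl τ u)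
  have f1 : ∀ s, τ.SameCycle b s → s ≠ u := by intro s hs e; rw [e] at hs; exact hbu hs
  have f2 : ∀ z, τ.SameCycle b z → z ≠ τ u := by
    rintro z hz rfl; exact hbu (hz.trans huy.symm)
  rcases lt_or_ge (c : ℕ) p with hcp | hcp
  · have hzp : (z : ℕ) < p := by
      have := po_side (z := z) (w := c) hu hzc.le
      omega
    have hbp : (b : ℕ) < p := by
      have := po_side (z := b) (w := z) hu hbz.le
      omega
    have k1 := po_ext (q := q) (v := v) hu hcp
    have k2 := po_ne hu hv (f1 c hbc)
    refine h1 (mkAC1 hu hv (a := b) (b := z) (c := c) (d := u) (Or.inl ⟨hbp, hzp, hcp, hu⟩) ?_ ?_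
      hbc hz.symm (fun k => hbu (k.trans hz.symm)))
    · unfold cyc; omega
    · unfold cyc; omega
  rcases lt_or_ge (b : ℕ) p with hbp | hbp
  · obtain ⟨⟨u1, ⟨⟨hu1, hu1p⟩, hu1'⟩, -⟩, -⟩ := hst.2 _ ⟨b, rfl⟩ ⟨b, Perm.SameCycle.refl τ b, hbp⟩
      ⟨c, hbc, hcp⟩
    have hu1 : τ.SameCycle b u1 := hu1
    have hu1p : (u1 : ℕ) < p := hu1p
    have hu1' : p ≤ (τ u1 : ℕ) := hu1'
    have hy1 : τ.SameCycle b (τ u1) := Perm.sameCycle_apply_right.2 hu1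
    have a1 := po_ext (q := q) (v := v) hu hbp
    have a2 := po_ext (q := q) (v := v) hu hu1p
    have a3 := po_int (q := q) (u := u) (v := v) hcp
    have a4 := po_int (q := q) (u := u) (v := v) hu1'
    have l1 : po p q u v b ≤ po p q u v u1 := by
      by_cases e : b = u1
      · rw [e]
      · have := hstd u1 b hu1.symm e (by rintro e; rw [e] at hbp; omega)
        unfold cyc at this
        omega
    have l2 : po p q u v (τ u1) ≤ po p q u v c := by
      by_cases e : c = τ u1
      · rw [e]
      · have := hstd u1 c (hu1.symm.trans hbc) (by rintro rfl; omega) e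
        unfold cyc at this
        omega
    have g1 := po_ne hu hv (f1 u1 hu1)
    have g2 := po_ne hu hv (f2 _ hy1)
    have hbw : ∀ s, τ.SameCycle b s → ∀ t, τ.SameCycle u t → t ≠ s := by
      rintro s hs t ht rfl
      exact hbu (hs.trans ht.symm)
    have ru := Perm.SameCycle.refl τ u
    have m1 := (lam_opp_fin hu hv hu1p hu1' (z := u) (w := w) (hbw _ hu1 _ ru) (hbw _ hy1 _ ru)
      (hbw _ hu1 _ hwu) (hbw _ hy1 _ hwu) ⟨by omega, by omega⟩ (by omega)).2 hu
    have m2 := mt (lam_opp_fin hu hv hu1p hu1' (z := τ u) (w := w) (hbw _ hu1 _ huy)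
      (hbw _ hy1 _ huy)
      (hbw _ hu1 _ hwu) (hbw _ hy1 _ hwu) ⟨by omega, by omega⟩ (by omega)).1 (by omega)
    have hwy : w ≠ τ u := by
      rintro rfl
      omega
    have m3 : pl p q u1 (τ u1) w ≠ pl p q u1 (τ u1) (τ u) := by
      intro e
      refine hwy ((isCyc_lam u1 (τ u1) hu1p hu1').inj ?_ ?_ e)
      · simp [hbw _ hu1 _ hwu, hbw _ hy1 _ hwu]
      · have := hbw _ hu1 _ huy
        have := hbw _ hy1 _ huy
        simp_all
    refine h2 (mkAC2 hu1p hu1' (hu1.symm.trans hy1) (a := u) (b := w) (c := τ u) ?_ hwu rfl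
      (fun k => hbu (hu1.trans k.symm)))
    unfold cyc
    omega
  · have hzp : p ≤ (z : ℕ) := po_side (z := b) (w := z) hu hbz.le hbp
    have k1 := po_int (q := q) (u := u) (v := v) hbp
    have k2 := po_ne hu hv (f2 b (Perm.SameCycle.refl τ b))
    refine h1 (mkAC1 hu hv (a := τ u) (b := b) (c := z) (d := c) (Or.inr ⟨hy', hbp, hzp, hcp⟩) ?_ ?_
      (huy.symm.trans hz) hbc (fun k => hbu (k.symm.trans huy.symm)))
    · unfold cyc; omega
    · unfold cyc; omega

theorem conn_nc {τ : Perm (Fin (p + q))} (h : AnnNC p q τ) {u v : Fin (p + q)}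
    (hu : (u : ℕ) < p) (hv : p ≤ (v : ℕ)) (hy : gammaAnn p q v = τ u) (hy' : p ≤ (τ u : ℕ))
    (a b c d : Fin (p + q)) (hab : po p q u v a < po p q u v b)
    (hbc : po p q u v b < po p q u v c) (hcd : po p q u v c < po p q u v d)
    (hac : τ.SameCycle a c) (hbd : τ.SameCycle b d) : τ.SameCycle a b := by
  by_contra hn
  have huy : τ.SameCycle u (τ u) := Perm.sameCycle_apply_right.2 (Perm.SameCycle.refl τ u)
  by_cases hau : τ.SameCycle a u
  · exact conn_sep h hu hv hy hy' (b := b) (z := c) (c := d) (w := a) hbc hcd (Or.inl hab) hbd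
      (fun k => hn (hau.trans k.symm)) (hau.symm.trans hac) hau.symm
  by_cases hbu : τ.SameCycle b u
  · exact conn_sep h hu hv hy hy' (b := a) (z := b) (c := c) (w := d) hab hbc (Or.inr hcd) hac
      hau hbu.symm (hbu.symm.trans hbd)
  obtain ⟨hst, h1, h2, h3⟩ := h
  have f1 : ∀ z, τ.SameCycle a z ∨ τ.SameCycle b z → z ≠ u := by
    rintro z (hz | hz) rfl
    exacts [hau hz, hbu hz]
  have f2 : ∀ z, τ.SameCycle a z ∨ τ.SameCycle b z → z ≠ τ u := by
    rintro z (hz | hz) rfl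
    exacts [hau (hz.trans huy.symm), hbu (hz.trans huy.symm)]
  have L : ∀ z w, τ.SameCycle a z ∨ τ.SameCycle b z → τ.SameCycle a w ∨ τ.SameCycle b w →
      (pl p q u (τ u) z < pl p q u (τ u) w ↔ po p q u v z < po p q u v w) :=
    fun z w hz hw => lam_conn hu hv hy hy' (f1 z hz) (f2 z hz) (f1 w hw) (f2 w hw)
  have ra := Perm.SameCycle.refl τ a
  have rb := Perm.SameCycle.refl τ b
  have l1 := (L a b (Or.inl ra) (Or.inr rb)).2 hab
  have l2 := (L b c (Or.inr rb) (Or.inl hac)).2 hbc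
  have l3 := (L c d (Or.inl hac) (Or.inr hbd)).2 hcd
  refine h3 (mkAC3 hu hy' huy (a := a) (b := b) (c := c) (d := d) ?_ ?_ hac hbd hn hau hbu)
  · unfold cyc; omega
  · unfold cyc; omega

theorem part1 {τ : Perm (Fin (p + q))} (hp : 0 < p) (hq : 0 < q) (h : AnnNC p q τ) :
    ∃ u v : Fin (p + q), (u : ℕ) < p ∧ p ≤ (v : ℕ) ∧ Good τ (gammaAnn p q * swap u v) := by
  by_cases hs : ∀ z, (τ z : ℕ) < p ↔ (z : ℕ) < p
  · exact part1_disc hp hq h hs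
  have hu : ∃ u : Fin (p + q), (u : ℕ) < p ∧ p ≤ (τ u : ℕ) := by
    push Not at hs
    obtain ⟨z, hz⟩ := hs
    have hzz : τ.SameCycle z (τ z) := Perm.sameCycle_apply_right.2 (Perm.SameCycle.refl τ z)
    rcases hz with ⟨i, j⟩ | ⟨i, j⟩
    · obtain ⟨⟨u1, ⟨⟨hu1, hu1p⟩, hu1'⟩, -⟩, -⟩ := h.1.2 _ ⟨z, rfl⟩ ⟨τ z, hzz, i⟩
        ⟨z, Perm.SameCycle.refl τ z, j⟩
      exact ⟨u1, hu1p, hu1'⟩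
    · exact ⟨z, j, i⟩
  obtain ⟨u, hu, hy'⟩ := hu
  have hv : p ≤ (((gammaAnn p q)⁻¹ (τ u) : Fin (p + q)) : ℕ) := by
    have := side_inv (π := gammaAnn p q) gammaAnn_lt (τ u)
    omega
  have hy : gammaAnn p q ((gammaAnn p q)⁻¹ (τ u)) = τ u := by simp
  exact ⟨u, _, hu, hv, part1_good hu hv (conn_std h hu hv hy hy') (conn_nc h hu hv hy hy')⟩

end PartOneConn

end Kreweras

/-- Corollary 6.6: if `τ ∈ S_ann-nc(p,q)`, then `τ⁻¹γ ∈ S_ann-nc(p,q)` (so the annular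
Kreweras complementation `K(τ) = τ⁻¹γ` maps `S_ann-nc(p,q)` to itself). -/
theorem stmt_19 (p q : ℕ) (hp : 0 < p) (hq : 0 < q)
    (τ : Equiv.Perm (Fin (p + q))) (h : AnnNC p q τ) :
    AnnNC p q (τ⁻¹ * gammaAnn p q) := by
  obtain ⟨u, v, hu, hv, hg⟩ := part1 hp hq h
  obtain ⟨u', v', hu', hv', hg'⟩ := middle hu hv hg
  exact annNC_of_good hu' hv' hg'
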